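/- Let H be an algebraic extension of the field of rational numbers. Then the set of elements of H that can be written as a sum of four squares of elements of H, i.e. {x ∈ H | ∃ x₁,x₂,x₃,x₄ ∈ H, x = x₁² + x₂² + x₃² + x₄²}, is exactly the set of x ∈ H such that for every field embedding σ : H → ℝ one has σ(x) ≥ 0. -/

import Mathlib

namespace FourSq
open IsDedekindDomain NumberField
variable {K : Type*} [Field K] [NumberField K]

lemma vle (v : HeightOneSpectrum (𝓞 K)) (a : 𝓞 K) : v.valuation K (algebraMap (𝓞 K) K a) ≤ 1 :=
  v.valuation_le_one (K := K) a

lemma vlt_iff (v : HeightOneSpectrum (𝓞 K)) (a : 𝓞 K) :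
    v.valuation K (algebraMap (𝓞 K) K a) < 1 ↔ a ∈ v.asIdeal :=
  v.valuation_lt_one_iff_mem (K := K) a

lemma veq_iff (v : HeightOneSpectrum (𝓞 K)) (a : 𝓞 K) :
    v.valuation K (algebraMap (𝓞 K) K a) = 1 ↔ a ∉ v.asIdeal := by
  rw [← vlt_iff, not_lt]
  exact ⟨fun h => h.ge, fun h => le_antisymm (vle v a) h⟩

lemma vpow_iff (v : HeightOneSpectrum (𝓞 K)) (a : 𝓞 K) (n : ℕ) :
    v.valuation K (algebraMap (𝓞 K) K a) ≤ WithZero.exp (-(n : ℤ)) ↔ a ∈ v.asIdeal ^ n := by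
  rw [← v.intValuation_le_pow_iff_mem, ← v.valuation_of_algebraMap (K := K)]

lemma v_nat_le (v : HeightOneSpectrum (𝓞 K)) (n : ℕ) : v.valuation K (n : K) ≤ 1 := by
  have := vle v (n : 𝓞 K)
  rwa [map_natCast] at this

lemma val4_le (v : HeightOneSpectrum (𝓞 K)) : v.valuation K (4:K) ≤ 1 := by
  exact_mod_cast v_nat_le v 4

lemma val2_le (v : HeightOneSpectrum (𝓞 K)) : v.valuation K (2:K) ≤ 1 := by
  exact_mod_cast v_nat_le v 2

lemma v_ne_zero (v : HeightOneSpectrum (𝓞 K)) {x : K} (hx : x ≠ 0) : v.valuation K x ≠ 0 :=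
  (Valuation.ne_zero_iff _).2 hx

lemma v_pos (v : HeightOneSpectrum (𝓞 K)) {x : K} (hx : x ≠ 0) : 0 < v.valuation K x :=
  zero_lt_iff.2 (v_ne_zero v hx)

/-- fractions -/
lemma exists_frac (x : K) : ∃ a b : 𝓞 K, b ≠ 0 ∧ x = algebraMap (𝓞 K) K a / algebraMap (𝓞 K) K b := by
  obtain ⟨a, b, hb, h⟩ := IsFractionRing.div_surjective (A := 𝓞 K) x
  exact ⟨a, b, nonZeroDivisors.ne_zero hb, h.symm⟩

lemma val4_eq (v : HeightOneSpectrum (𝓞 K)) : v.valuation K (4:K) = v.valuation K (2:K) ^ 2 := by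
  rw [← map_pow]; norm_num

/-- local squares at `v`. -/
def LS (v : HeightOneSpectrum (𝓞 K)) : Subgroup Kˣ where
  carrier := {x | ∃ y : Kˣ, v.valuation K (x * y ^ 2 - 1) < v.valuation K 4}
  one_mem' := ⟨1, by
    have : v.valuation K (4:K) ≠ 0 := (Valuation.ne_zero_iff _).2 (by norm_num)
    simpa using zero_lt_iff.2 this⟩
  mul_mem' := by
    rintro a b ⟨y, hy⟩ ⟨z, hz⟩
    refine ⟨y * z, ?_⟩
    have h4 := val4_le v
    have e : ((a * b : Kˣ) : K) * ((y * z : Kˣ) : K) ^ 2 - 1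
        = (a * y ^ 2 - 1) * (b * z ^ 2 - 1) + ((a * y ^ 2 - 1) + (b * z ^ 2 - 1)) := by
      push_cast; ring
    rw [e]
    refine Valuation.map_add_lt _ ?_ (Valuation.map_add_lt _ hy hz)
    rw [map_mul]
    calc _ ≤ v.valuation K (a * y ^ 2 - 1 : K) * 1 := by gcongr; exact (hz.trans_le h4).le
      _ < _ := by simpa using hy
  inv_mem' := by
    rintro a ⟨y, hy⟩
    refine ⟨y⁻¹, ?_⟩
    have h4 := val4_le v
    have h1 : v.valuation K (a * y ^ 2 : K) = 1 := by
      have := Valuation.map_add_eq_of_lt_right (v.valuation K) (x := (a * y ^ 2 - 1 : K)) (y := 1)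
        (by simpa using hy.trans_le h4)
      simpa using this
    have e : ((a⁻¹ : Kˣ) : K) * ((y⁻¹ : Kˣ) : K) ^ 2 - 1
        = -((a * y ^ 2 - 1)) * (a * y ^ 2 : K)⁻¹ := by
      have := a.ne_zero
      have := y.ne_zero
      push_cast; field_simp; ring
    rw [e, map_mul, Valuation.map_neg, map_inv₀, h1]
    simpa using hy

/-- S-units. -/
def US (S : Finset (HeightOneSpectrum (𝓞 K))) : Subgroup Kˣ where
  carrier := {x | ∀ v ∉ S, v.valuation K (x : K) = 1}
  one_mem' := by intro v _; simp
  mul_mem' := by intro a b ha hb v hv; simp [ha v hv, hb v hv]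
  inv_mem' := by intro a ha v hv; simp [ha v hv]

/-- norm values `α² - uβ²`. -/
def NV (u : K) : Subgroup Kˣ where
  carrier := {x | ∃ α β : K, (x : K) = α ^ 2 - u * β ^ 2}
  one_mem' := ⟨1, 0, by simp⟩
  mul_mem' := by
    rintro a b ⟨p, q, h⟩ ⟨r, s, h'⟩
    exact ⟨p * r + u * q * s, p * s + q * r, by push_cast; rw [h, h']; ring⟩
  inv_mem' := by
    rintro a ⟨p, q, h⟩
    refine ⟨p * (a : K)⁻¹, q * (a : K)⁻¹, ?_⟩
    have := a.ne_zero
    push_cast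
    field_simp
    exact h

/-- even valuation at `v`. -/
def EV (v : HeightOneSpectrum (𝓞 K)) : Subgroup Kˣ where
  carrier := {x | ∃ y : Kˣ, v.valuation K (x : K) = v.valuation K (y : K) ^ 2}
  one_mem' := ⟨1, by simp⟩
  mul_mem' := by
    rintro a b ⟨y, h⟩ ⟨z, h'⟩
    exact ⟨y * z, by simp [h, h', mul_pow]⟩
  inv_mem' := by
    rintro a ⟨y, h⟩
    exact ⟨y⁻¹, by simp [h]⟩

/-- every ideal is principal away from S -/
def PrS (S : Finset (HeightOneSpectrum (𝓞 K))) : Prop :=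
  ∀ I : Ideal (𝓞 K), I ≠ ⊥ → ∃ c : Kˣ, ∀ v ∉ S,
    (∀ a ∈ I, v.valuation K (algebraMap (𝓞 K) K a) ≤ v.valuation K (c : K)) ∧
    (∃ i ∈ I, v.valuation K (algebraMap (𝓞 K) K i) = v.valuation K (c : K))

lemma PrS.mono {S T : Finset (HeightOneSpectrum (𝓞 K))} (h : PrS S) (hST : S ⊆ T) : PrS T := by
  intro I hI
  obtain ⟨c, hc⟩ := h I hI
  exact ⟨c, fun v hv => hc v (fun h => hv (hST h))⟩

lemma US_mono {S T : Finset (HeightOneSpectrum (𝓞 K))} (hST : S ⊆ T) : US S ≤ US T :=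
  fun _ hx v hv => hx v (fun h => hv (hST h))

lemma sq_mem_LS (v : HeightOneSpectrum (𝓞 K)) (x : Kˣ) : x ^ 2 ∈ LS v := by
  refine ⟨x⁻¹, ?_⟩
  have : v.valuation K (4:K) ≠ 0 := (Valuation.ne_zero_iff _).2 (by norm_num)
  simpa using zero_lt_iff.2 this

lemma LS_le_EV (v : HeightOneSpectrum (𝓞 K)) : LS v ≤ EV v := by
  rintro a ⟨y, hy⟩
  refine ⟨y⁻¹, ?_⟩
  have h1 : v.valuation K (a * y ^ 2 : K) = 1 := by
    have := Valuation.map_add_eq_of_lt_right (v.valuation K) (x := (a * y ^ 2 - 1 : K)) (y := 1)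
      (by simpa using hy.trans_le (val4_le v))
    simpa using this
  rw [map_mul, map_pow] at h1
  have : v.valuation K (y : K) ≠ 0 := (Valuation.ne_zero_iff _).2 y.ne_zero
  simp
  field_simp
  exact h1

/-- Pattern lemma. -/
lemma pattern_relIndex {G ι : Type*} [CommGroup G] (T : Finset ι) (F : ι → Subgroup G)
    (U V : Subgroup G) (hV : ∀ i ∈ T, V ≤ F i)
    (h : ∀ η : ι → Prop, ∃ x ∈ U, ∀ i ∈ T, (x ∈ F i ↔ η i)) (h0 : V.relIndex U ≠ 0) :
    2 ^ T.card ≤ V.relIndex U := by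
  classical
  have hfin : Finite (U ⧸ V.subgroupOf U) := Nat.finite_of_card_ne_zero h0
  choose f hf hf' using h
  let g : Finset.powerset T → U ⧸ V.subgroupOf U := fun A =>
    QuotientGroup.mk ⟨f (fun i => i ∈ A.1), hf _⟩
  have hg : Function.Injective g := by
    rintro ⟨A, hA⟩ ⟨B, hB⟩ hAB
    rw [Finset.mem_powerset] at hA hB
    have := QuotientGroup.eq.1 hAB
    rw [Subgroup.mem_subgroupOf] at this
    simp only [Subgroup.coe_mul, Subgroup.coe_inv] at this
    ext i
    constructor
    · intro hi
      have h1 := (hf' (fun i => i ∈ A) i (hA hi)).2 hi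
      have h2 := (F i).mul_mem h1 (hV i (hA hi) this)
      rw [mul_inv_cancel_left] at h2
      exact (hf' (fun i => i ∈ B) i (hA hi)).1 h2
    · intro hi
      have h1 := (hf' (fun i => i ∈ B) i (hB hi)).2 hi
      have h2 := (F i).mul_mem h1 ((F i).inv_mem (hV i (hB hi) this))
      rw [mul_inv_rev, inv_inv, mul_inv_cancel_left] at h2
      exact (hf' (fun i => i ∈ A) i (hB hi)).1 h2
  have := Nat.card_le_card_of_injective g hg
  rwa [Nat.card_eq_fintype_card, Fintype.card_coe, Finset.card_powerset] at this

end FourSq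

namespace FourSq
open IsDedekindDomain NumberField
variable {K : Type*} [Field K] [NumberField K]

lemma exists_exp (v : HeightOneSpectrum (𝓞 K)) {x : K} (hx : x ≠ 0) :
    ∃ n : ℤ, v.valuation K x = WithZero.exp n :=
  ⟨WithZero.log (v.valuation K x), (WithZero.exp_log (v_ne_zero v hx)).symm⟩

lemma exists_unit_exp (v : HeightOneSpectrum (𝓞 K)) (n : ℤ) :
    ∃ y : Kˣ, v.valuation K (y : K) = WithZero.exp n := by
  obtain ⟨y, hy⟩ := v.valuation_surjective K (WithZero.exp n)
  have : y ≠ 0 := by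
    rintro rfl
    rw [map_zero] at hy
    exact WithZero.exp_ne_zero hy.symm
  exact ⟨Units.mk0 y this, hy⟩

lemma mem_EV_iff (v : HeightOneSpectrum (𝓞 K)) (x : Kˣ) (n : ℤ)
    (hx : v.valuation K (x : K) = WithZero.exp n) : x ∈ EV v ↔ Even n := by
  constructor
  · rintro ⟨y, hy⟩
    obtain ⟨m, hm⟩ := exists_exp v y.ne_zero
    rw [hx, hm, ← WithZero.exp_nsmul, WithZero.exp_inj] at hy
    exact ⟨m, by rw [hy]; simp [two_mul]⟩
  · rintro ⟨m, rfl⟩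
    obtain ⟨y, hy⟩ := exists_unit_exp v m
    exact ⟨y, by rw [hx, hy, ← WithZero.exp_nsmul]; simp [two_mul]⟩

lemma mul_mem_EV (v : HeightOneSpectrum (𝓞 K)) {x y : Kˣ} (hx : x ∉ EV v) (hy : y ∉ EV v) :
    x * y ∈ EV v := by
  obtain ⟨m, hm⟩ := exists_exp v x.ne_zero
  obtain ⟨n, hn⟩ := exists_exp v y.ne_zero
  rw [mem_EV_iff v _ _ hm] at hx
  rw [mem_EV_iff v _ _ hn] at hy
  rw [mem_EV_iff v _ (m + n) (by push_cast; rw [map_mul, hm, hn, WithZero.exp_add])]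
  rw [Int.even_add]; tauto

lemma unit_mem_EV (v : HeightOneSpectrum (𝓞 K)) {x : Kˣ} (hx : v.valuation K (x : K) = 1) :
    x ∈ EV v := ⟨1, by simp [hx]⟩

lemma EV_index (v : HeightOneSpectrum (𝓞 K)) : (EV v).index = 2 := by
  rw [Subgroup.index_eq_two_iff]
  obtain ⟨a, ha⟩ := exists_unit_exp v 1
  have h : a ∉ EV v := by rw [mem_EV_iff v a 1 ha]; decide
  refine ⟨a, fun b => ?_⟩
  by_cases hb : b ∈ EV v
  · refine Or.inr ⟨hb, fun h' => h ?_⟩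
    exact (Subgroup.mul_mem_cancel_left _ hb).1 h'
  · exact Or.inl ⟨mul_mem_EV v hb h, hb⟩

/-- units at v -/
def UV (v : HeightOneSpectrum (𝓞 K)) : Subgroup Kˣ where
  carrier := {x | v.valuation K (x : K) = 1}
  one_mem' := by simp
  mul_mem' := by intro a b ha hb; simp_all
  inv_mem' := by intro a ha; simp_all

lemma EV_eq (v : HeightOneSpectrum (𝓞 K)) : EV v = UV v ⊔ LS v := by
  apply le_antisymm
  · rintro x ⟨y, hy⟩
    have : x = (x * (y ^ 2)⁻¹) * y ^ 2 := by group
    rw [this]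
    refine Subgroup.mul_mem_sup ?_ (sq_mem_LS v y)
    show v.valuation K _ = 1
    have := v_ne_zero v y.ne_zero
    simp [hy]
  · exact sup_le (fun x hx => unit_mem_EV v hx) (LS_le_EV v)

lemma NV_le_EV_odd (v : HeightOneSpectrum (𝓞 K)) (h2 : v.valuation K (2 : K) = 1) (u : Kˣ)
    (hu : u ∈ EV v) (hu' : u ∉ LS v) : NV (u : K) ≤ EV v := by
  have h4 : v.valuation K (4 : K) = 1 := by rw [val4_eq, h2, one_pow]
  rintro x ⟨α, β, hx⟩
  by_cases hβ : β = 0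
  · have hα : α ≠ 0 := by
      rintro rfl
      apply x.ne_zero; simp [hx, hβ]
    exact ⟨Units.mk0 α hα, by simp [hx, hβ]⟩
  set t := α / β with ht
  have hα : α = t * β := by rw [ht]; field_simp
  obtain ⟨y, hy⟩ := hu
  have key : v.valuation K (t ^ 2 - u) = v.valuation K (u : K) ∨
      (t ≠ 0 ∧ v.valuation K (t ^ 2 - u) = v.valuation K (t ^ 2)) := by
    rcases lt_trichotomy (v.valuation K (t ^ 2)) (v.valuation K (u : K)) with h | h | h
    · left
      rw [Valuation.map_sub_eq_of_lt_right _ h]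
    · left
      by_contra hne
      have hlt : v.valuation K (t ^ 2 - u) < v.valuation K (u : K) := by
        refine lt_of_le_of_ne ?_ hne
        exact (Valuation.map_sub _ _ _).trans (by rw [h, max_self])
      have ht0 : t ≠ 0 := by
        rintro h0
        rw [h0] at h
        simp at h
        exact v_ne_zero v u.ne_zero h.symm
      apply hu'
      refine ⟨(Units.mk0 t ht0)⁻¹, ?_⟩
      have : (u : K) * ((Units.mk0 t ht0)⁻¹ : Kˣ) ^ 2 - 1 = - (t ^ 2 - u) * (t ^ 2)⁻¹ := by
        simp; field_simp
      rw [this, map_mul, Valuation.map_neg, map_inv₀, h, h4]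
      rw [← div_eq_mul_inv, div_lt_one₀ (v_pos v u.ne_zero)]
      exact hlt
    · right
      refine ⟨?_, by rw [Valuation.map_sub_eq_of_lt_left _ h]⟩
      rintro h0
      rw [h0] at h
      simp at h
  have hx' : (x : K) = (t ^ 2 - u) * β ^ 2 := by rw [hx, hα]; ring
  rcases key with h | ⟨h0, h⟩
  · exact ⟨y * Units.mk0 β hβ, by simp [hx', h, hy, mul_pow]⟩
  · exact ⟨Units.mk0 t h0 * Units.mk0 β hβ, by simp [hx', h, mul_pow]⟩

/-- the norm group at ramified odd place -/
def FR (v : HeightOneSpectrum (𝓞 K)) (u : Kˣ) : Subgroup Kˣ where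
  carrier := {x | x ∈ LS v ∨ -u * x ∈ LS v}
  one_mem' := Or.inl (one_mem _)
  mul_mem' := by
    rintro a b (ha | ha) (hb | hb)
    · exact Or.inl (mul_mem ha hb)
    · right
      have : -u * (a * b) = a * (-u * b) := by ext; push_cast; ring
      rw [this]; exact mul_mem ha hb
    · right
      have : -u * (a * b) = (-u * a) * b := by ext; push_cast; ring
      rw [this]; exact mul_mem ha hb
    · left
      have : a * b = (-u * a) * (-u * b) * (u ^ 2)⁻¹ := by
        rw [eq_mul_inv_iff_mul_eq]; ext; push_cast; ring
      rw [this]; exact mul_mem (mul_mem ha hb) (inv_mem (sq_mem_LS v u))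
  inv_mem' := by
    rintro a (ha | ha)
    · exact Or.inl (inv_mem ha)
    · right
      have : -u * a⁻¹ = (-u * a) * (a ^ 2)⁻¹ := by
        rw [eq_mul_inv_iff_mul_eq, sq, mul_assoc, inv_mul_cancel_left]
      rw [this]; exact mul_mem ha (inv_mem (sq_mem_LS v a))

lemma NV_le_FR (v : HeightOneSpectrum (𝓞 K)) (h2 : v.valuation K (2 : K) = 1) (u : Kˣ)
    (hu : u ∉ EV v) : NV (u : K) ≤ FR v u := by
  have h4 : v.valuation K (4 : K) = 1 := by rw [val4_eq, h2, one_pow]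
  rintro x ⟨α, β, hx⟩
  have hne : α = 0 → β = 0 → False := by
    rintro rfl rfl; apply x.ne_zero; simp [hx]
  rcases lt_trichotomy (v.valuation K (α ^ 2)) (v.valuation K (u * β ^ 2 : K)) with h | h | h
  · right
    have hβ : β ≠ 0 := by rintro rfl; simp at h
    refine ⟨(u * Units.mk0 β hβ)⁻¹, ?_⟩
    have : ((-u * x : Kˣ) : K) * (((u * Units.mk0 β hβ)⁻¹ : Kˣ) : K) ^ 2 - 1
        = - α ^ 2 / (u * β ^ 2) := by
      have := u.ne_zero
      simp [hx]; field_simp; ring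
    rw [this, h4, map_div₀, Valuation.map_neg, div_lt_one₀ (v_pos v (by simp [hβ]))]
    exact h
  · exfalso
    have hβ : β ≠ 0 := by
      intro h0; rw [h0] at h; simp at h; exact hne h h0
    have hα : α ≠ 0 := by
      intro h0; rw [h0] at h; simp [hβ] at h
    apply hu
    refine ⟨Units.mk0 α hα * (Units.mk0 β hβ)⁻¹, ?_⟩
    have := v_ne_zero v hβ
    simp at h ⊢
    field_simp
    exact h.symm
  · left
    have hα : α ≠ 0 := by rintro rfl; simp at h
    refine ⟨(Units.mk0 α hα)⁻¹, ?_⟩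
    have : (x : K) * (((Units.mk0 α hα)⁻¹ : Kˣ) : K) ^ 2 - 1 = - (u * β ^ 2) / α ^ 2 := by
      simp [hx]; field_simp; ring
    rw [this, h4, map_div₀, Valuation.map_neg, div_lt_one₀ (v_pos v (by simp [hα]))]
    exact h

lemma unit_mem_FR_iff (v : HeightOneSpectrum (𝓞 K)) (u x : Kˣ)
    (hu : u ∉ EV v) (hx : v.valuation K (x : K) = 1) : x ∈ FR v u ↔ x ∈ LS v := by
  refine ⟨?_, Or.inl⟩
  rintro (h | h)
  · exact h
  · exfalso
    apply hu
    obtain ⟨y, hy⟩ := LS_le_EV v h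
    exact ⟨y, by simpa [hx] using hy⟩

lemma NV_neg3_le_EV (v : HeightOneSpectrum (𝓞 K)) (h2 : v.valuation K (2 : K) < 1) (u : Kˣ)
    (hu3 : (u : K) = -3) (hu' : u ∉ LS v) : NV (u : K) ≤ EV v := by
  have h4 : v.valuation K (4 : K) < 1 := by
    rw [val4_eq]; exact pow_lt_one₀ zero_le h2 (by norm_num)
  have h3 : v.valuation K (-3 : K) = 1 := by
    have : (-3 : K) = 1 - 4 := by norm_num
    rw [this, Valuation.map_sub_eq_of_lt_left _ (by simpa using h4), map_one]
  rintro x ⟨α, β, hx⟩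
  rw [hu3] at hx
  by_cases hβ : β = 0
  · have hα : α ≠ 0 := by
      rintro rfl
      apply x.ne_zero; simp [hx, hβ]
    exact ⟨Units.mk0 α hα, by simp [hx, hβ]⟩
  set t := (α - β) / (2 * β) with ht
  have hα : α = 2 * t * β + β := by rw [ht]; field_simp; ring
  have hx' : (x : K) = (t ^ 2 + t + 1) * (2 * β) ^ 2 := by rw [hx, hα]; ring
  have key : v.valuation K (t ^ 2 + t + 1) = 1 ∨
      (t ≠ 0 ∧ v.valuation K (t ^ 2 + t + 1) = v.valuation K (t ^ 2)) := by
    rcases le_or_gt (v.valuation K t) 1 with h | h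
    · left
      by_contra hne
      have hle : v.valuation K (t ^ 2 + t + 1) ≤ 1 := by
        refine Valuation.map_add_le _ (Valuation.map_add_le _ ?_ h) (by simp)
        rw [map_pow]; exact pow_le_one₀ zero_le h
      have hlt := lt_of_le_of_ne hle hne
      have h4l : v.valuation K (4 * (t ^ 2 + t + 1)) < v.valuation K 4 := by
        rw [map_mul]
        exact mul_lt_of_lt_one_right (v_pos v (by norm_num)) hlt
      have e : (2 * t + 1) ^ 2 = -3 + 4 * (t ^ 2 + t + 1) := by ring
      have h1 : v.valuation K ((2 * t + 1) ^ 2) = 1 := by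
        rw [e, Valuation.map_add_eq_of_lt_left _ (by rw [h3]; exact h4l.trans h4), h3]
      have hn : 2 * t + 1 ≠ 0 := by
        intro h0; rw [h0] at h1; simp at h1
      apply hu'
      refine ⟨(Units.mk0 _ hn)⁻¹, ?_⟩
      have : (u : K) * (((Units.mk0 _ hn)⁻¹ : Kˣ) : K) ^ 2 - 1 =
          - (4 * (t ^ 2 + t + 1)) * ((2 * t + 1) ^ 2)⁻¹ := by
        simp [hu3]; field_simp; ring
      rw [this, map_mul, map_inv₀, h1, Valuation.map_neg]
      simpa using h4l
    · right
      have h0 : t ≠ 0 := by rintro h0; rw [h0] at h; simp at h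
      refine ⟨h0, ?_⟩
      have h1 : v.valuation K t < v.valuation K (t ^ 2) := by
        rw [map_pow, sq]; exact lt_mul_of_one_lt_right (v_pos v h0) h
      rw [add_assoc, Valuation.map_add_eq_of_lt_left]
      exact Valuation.map_add_lt _ h1 (by rw [map_one]; exact h.trans h1)
  rcases key with h | ⟨h0, h⟩
  · exact ⟨Units.mk0 (2 * β) (by simp [hβ]), by simp [hx', h]⟩
  · exact ⟨Units.mk0 t h0 * Units.mk0 (2 * β) (by simp [hβ]), by simp [hx', h, mul_pow]⟩

end FourSq

namespace FourSq
open IsDedekindDomain NumberField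
variable {K : Type*} [Field K] [NumberField K]

/-- `e` with `v 2 = exp (-e)`. -/
lemma exists_e2 (v : HeightOneSpectrum (𝓞 K)) : ∃ e : ℕ, v.valuation K (2 : K) = WithZero.exp (-(e : ℤ)) := by
  obtain ⟨n, hn⟩ := exists_exp v (x := (2 : K)) (by norm_num)
  have := val2_le v
  rw [hn, ← WithZero.exp_zero, WithZero.exp_le_exp] at this
  obtain ⟨e, he⟩ := Int.eq_ofNat_of_zero_le (a := -n) (by omega)
  exact ⟨e, by rw [hn]; congr; omega⟩

lemma vlt_exp_iff (v : HeightOneSpectrum (𝓞 K)) (x : K) (m : ℕ) :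
    v.valuation K x < WithZero.exp (-(m : ℤ)) ↔ v.valuation K x ≤ WithZero.exp (-((m + 1 : ℕ) : ℤ)) := by
  by_cases hx : x = 0
  · subst hx; simp 
  · obtain ⟨n, hn⟩ := exists_exp v hx
    rw [hn, WithZero.exp_le_exp, WithZero.exp_lt_exp]; push_cast; omega

lemma v_lt4_iff (v : HeightOneSpectrum (𝓞 K)) {e : ℕ} (he : v.valuation K (2 : K) = WithZero.exp (-(e : ℤ)))
    (a : 𝓞 K) : v.valuation K (algebraMap (𝓞 K) K a) < v.valuation K 4 ↔ a ∈ v.asIdeal ^ (2 * e + 1) := by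
  rw [← vpow_iff, ← vlt_exp_iff, val4_eq, he, ← WithZero.exp_nsmul]
  simp

lemma v_lt2_iff (v : HeightOneSpectrum (𝓞 K)) {e : ℕ} (he : v.valuation K (2 : K) = WithZero.exp (-(e : ℤ)))
    (a : 𝓞 K) : v.valuation K (algebraMap (𝓞 K) K a) < v.valuation K 2 ↔ a ∈ v.asIdeal ^ (e + 1) := by
  rw [← vpow_iff, ← vlt_exp_iff, he]

lemma vpow_ne_bot (v : HeightOneSpectrum (𝓞 K)) (n : ℕ) : v.asIdeal ^ n ≠ ⊥ :=
  pow_ne_zero _ v.ne_bot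

instance finQuot (v : HeightOneSpectrum (𝓞 K)) (n : ℕ) : Finite (𝓞 K ⧸ v.asIdeal ^ n) :=
  Ideal.finiteQuotientOfFreeOfNeBot _ (vpow_ne_bot v n)

lemma card_quot (v : HeightOneSpectrum (𝓞 K)) (n : ℕ) :
    Nat.card (𝓞 K ⧸ v.asIdeal ^ n) = Ideal.absNorm v.asIdeal ^ n := by
  rw [← map_pow, Ideal.absNorm_apply]; rfl

lemma card_ker (v : HeightOneSpectrum (𝓞 K)) (e : ℕ) :
    Nat.card (RingHom.ker (Ideal.Quotient.factor (Ideal.pow_le_pow_right (I := v.asIdeal)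
      (show e + 1 ≤ 2 * e + 1 by omega)))) = Ideal.absNorm v.asIdeal ^ e := by
  set f := Ideal.Quotient.factor (Ideal.pow_le_pow_right (I := v.asIdeal)
      (show e + 1 ≤ 2 * e + 1 by omega))
  have hs : Function.Surjective f := Ideal.Quotient.factor_surjective _
  have h := AddSubgroup.card_eq_card_quotient_mul_card_addSubgroup f.toAddMonoidHom.ker
  have h2 : Nat.card ((𝓞 K ⧸ v.asIdeal ^ (2 * e + 1)) ⧸ f.toAddMonoidHom.ker) =
     Nat.card (𝓞 K ⧸ v.asIdeal ^ (e + 1)) :=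
    Nat.card_congr (QuotientAddGroup.quotientKerEquivOfSurjective f.toAddMonoidHom hs).toEquiv
  rw [h2, card_quot, card_quot] at h
  have hN : 0 < Ideal.absNorm v.asIdeal := Nat.pos_of_ne_zero (Ideal.absNorm_eq_zero_iff.not.2 v.ne_bot)
  have h3 : Nat.card f.toAddMonoidHom.ker = Nat.card (RingHom.ker f) := rfl
  rw [h3] at h
  have : 2 * e + 1 = (e + 1) + e := by ring
  have h' : Ideal.absNorm v.asIdeal ^ (e + 1) * Ideal.absNorm v.asIdeal ^ e =
      Ideal.absNorm v.asIdeal ^ (e + 1) * Nat.card (RingHom.ker f) := by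
    rw [← h, ← pow_add, ← this]
  exact (Nat.eq_of_mul_eq_mul_left (pow_pos hN _) h').symm

lemma card_sqrt_one (v : HeightOneSpectrum (𝓞 K)) {e : ℕ}
    (he : v.valuation K (2 : K) = WithZero.exp (-(e : ℤ))) :
    Nat.card (powMonoidHom 2 : (𝓞 K ⧸ v.asIdeal ^ (2 * e + 1))ˣ →* _).ker ≤
      2 * Ideal.absNorm v.asIdeal ^ e := by
  rw [← card_ker v e]
  set f := Ideal.Quotient.factor (Ideal.pow_le_pow_right (I := v.asIdeal)
      (show e + 1 ≤ 2 * e + 1 by omega))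
  have key : ∀ x : (powMonoidHom 2 : (𝓞 K ⧸ v.asIdeal ^ (2 * e + 1))ˣ →* _).ker,
      ∃ p : Bool × RingHom.ker f, ((x : (𝓞 K ⧸ v.asIdeal ^ (2 * e + 1))ˣ) : 𝓞 K ⧸ v.asIdeal ^ (2 * e + 1)) =
        (bif p.1 then 1 else -1) + p.2 := by
    rintro ⟨x, hx⟩
    have hx2 : (x : 𝓞 K ⧸ v.asIdeal ^ (2 * e + 1)) ^ 2 = 1 := by
      have : x ^ 2 = 1 := hx
      simpa using congrArg Units.val this
    obtain ⟨c, hc⟩ := Ideal.Quotient.mk_surjective (x : 𝓞 K ⧸ v.asIdeal ^ (2 * e + 1))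
    have hm : (c - 1) * (c + 1) ∈ v.asIdeal ^ (2 * e + 1) := by
      rw [← Ideal.Quotient.eq_zero_iff_mem]
      have : (c - 1) * (c + 1) = c ^ 2 - 1 := by ring
      rw [this]; simp [hc, hx2]
    rw [← v_lt4_iff v he, map_mul, map_mul, val4_eq, sq] at hm
    have : v.valuation K (algebraMap (𝓞 K) K (c - 1)) < v.valuation K 2 ∨
        v.valuation K (algebraMap (𝓞 K) K (c + 1)) < v.valuation K 2 := by
      by_contra! h
      exact absurd hm (not_lt.2 (mul_le_mul' h.1 h.2))
    rw [v_lt2_iff v he, v_lt2_iff v he] at this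
    rcases this with h | h
    · refine ⟨(true, ⟨Ideal.Quotient.mk _ (c - 1), ?_⟩), ?_⟩
      · rw [RingHom.mem_ker, Ideal.Quotient.factor_mk, Ideal.Quotient.eq_zero_iff_mem]; exact h
      · simp [← hc]
    · refine ⟨(false, ⟨Ideal.Quotient.mk _ (c + 1), ?_⟩), ?_⟩
      · rw [RingHom.mem_ker, Ideal.Quotient.factor_mk, Ideal.Quotient.eq_zero_iff_mem]; exact h
      · simp [← hc]
  choose g hg using key
  have hinj : Function.Injective g := by
    intro x y h
    apply Subtype.ext
    apply Units.ext
    rw [hg x, hg y, h]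
  have := Nat.card_le_card_of_injective g hinj
  rw [Nat.card_prod] at this
  simpa using this

lemma index_sq_le (v : HeightOneSpectrum (𝓞 K)) {e : ℕ}
    (he : v.valuation K (2 : K) = WithZero.exp (-(e : ℤ))) :
    (powMonoidHom 2 : (𝓞 K ⧸ v.asIdeal ^ (2 * e + 1))ˣ →* _).range.index ≤
      2 * Ideal.absNorm v.asIdeal ^ e := by
  refine le_trans (le_of_eq ?_) (card_sqrt_one v he)
  set φ := (powMonoidHom 2 : (𝓞 K ⧸ v.asIdeal ^ (2 * e + 1))ˣ →* _)
  have h1 := Subgroup.card_mul_index φ.ker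
  have h2 := Subgroup.card_mul_index φ.range
  rw [Subgroup.index_ker, mul_comm] at h1
  rw [← h2] at h1
  exact (Nat.eq_of_mul_eq_mul_left Nat.card_pos h1).symm

lemma LS_relIndex_UV (v : HeightOneSpectrum (𝓞 K)) {e : ℕ}
    (he : v.valuation K (2 : K) = WithZero.exp (-(e : ℤ))) :
    (LS v).relIndex (UV v) ≠ 0 ∧ (LS v).relIndex (UV v) ≤ 2 * Ideal.absNorm v.asIdeal ^ e := by
  set R := 𝓞 K ⧸ v.asIdeal ^ (2 * e + 1)
  set Q := Rˣ ⧸ (powMonoidHom 2 : Rˣ →* _).range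
  have h4 := val4_le v
  have key : ∀ x : UV v, ∃ (a : 𝓞 K) (r : Rˣ), v.valuation K ((x : Kˣ) - algebraMap (𝓞 K) K a) < v.valuation K 4 ∧
      Ideal.Quotient.mk _ a = (r : R) := by
    rintro ⟨x, hx⟩
    have hx1 : v.valuation K (x : K) = 1 := hx
    obtain ⟨a, ha⟩ := v.exists_valuation_sub_lt_of_integer (x := (x : K)) hx1.le
      (Units.mk0 (v.valuation K 4) (v_ne_zero v (by norm_num)))
    have ha' : v.valuation K ((x : K) - algebraMap (𝓞 K) K a) < v.valuation K 4 := by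
      rw [← Valuation.map_neg]; simpa using ha
    have ha1 : v.valuation K (algebraMap (𝓞 K) K a) = 1 := by
      have : algebraMap (𝓞 K) K a = x - (x - algebraMap (𝓞 K) K a) := by ring
      rw [this, Valuation.map_sub_eq_of_lt_left _ (by rw [hx1]; exact ha'.trans_le h4), hx1]
    have hu : IsUnit (Ideal.Quotient.mk (v.asIdeal ^ (2 * e + 1)) a) := by
      rw [veq_iff] at ha1
      have hmax := v.isMaximal
      exact Ideal.Quotient.isUnit_mk_pow_of_notMem _ ha1
    exact ⟨a, hu.unit, ha', rfl⟩
  choose a r har hr using key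
  let g : (UV v ⧸ (LS v).subgroupOf (UV v)) → Q := fun q => QuotientGroup.mk (r q.out)
  have hg : Function.Injective g := by
    intro p q h
    obtain ⟨s, hs⟩ := QuotientGroup.eq.1 h
    rw [← p.out_eq', ← q.out_eq']
    generalize p.out = x at hs ⊢
    generalize q.out = y at hs ⊢
    apply QuotientGroup.eq.2
    have hx1 : v.valuation K ((x : Kˣ) : K) = 1 := x.2
    have hy1 : v.valuation K ((y : Kˣ) : K) = 1 := y.2
    have hs' : r y = r x * s ^ 2 := by
      rw [show s ^ 2 = _ from hs, mul_inv_cancel_left]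
    obtain ⟨c, hc⟩ := Ideal.Quotient.mk_surjective (s : R)
    have h1 : a y - a x * c ^ 2 ∈ v.asIdeal ^ (2 * e + 1) := by
      rw [← Ideal.Quotient.eq_zero_iff_mem, map_sub, map_mul, map_pow, hc, hr, hr, hs']
      push_cast; ring
    rw [← v_lt4_iff v he, map_sub, map_mul, map_pow] at h1
    have hx2 := har x
    have hy2 := har y
    set A := algebraMap (𝓞 K) K (a x)
    set B := algebraMap (𝓞 K) K (a y)
    set C := algebraMap (𝓞 K) K c
    have hC : v.valuation K C ≤ 1 := vle v c
    have h2 : v.valuation K ((y : Kˣ) - (x : Kˣ) * C ^ 2 : K) < v.valuation K 4 := by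
      have : ((y : Kˣ) - (x : Kˣ) * C ^ 2 : K) = ((y : Kˣ) - B) + ((B - A * C ^ 2) - ((x : Kˣ) - A) * C ^ 2) := by ring
      rw [this]
      refine Valuation.map_add_lt _ hy2 (Valuation.map_sub_lt _ h1 ?_)
      rw [map_mul, map_pow]
      exact lt_of_le_of_lt (mul_le_of_le_one_right' (pow_le_one₀ zero_le hC)) hx2
    have h3 : v.valuation K ((x : Kˣ) * C ^ 2 : K) = 1 := by
      have : ((x : Kˣ) * C ^ 2 : K) = (y : Kˣ) - ((y : Kˣ) - (x : Kˣ) * C ^ 2) := by ring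
      rw [this, Valuation.map_sub_eq_of_lt_left _ (by rw [hy1]; exact h2.trans_le h4), hy1]
    have hC0 : C ≠ 0 := by
      intro h0; rw [h0] at h3; simp at h3
    rw [Subgroup.mem_subgroupOf]
    refine ⟨(Units.mk0 C hC0)⁻¹, ?_⟩
    have : ((((x⁻¹ * y : UV v) : Kˣ)) : K) * (((Units.mk0 C hC0)⁻¹ : Kˣ) : K) ^ 2 - 1 =
       ((y : Kˣ) - (x : Kˣ) * C ^ 2 : K) * ((x : Kˣ) * C ^ 2 : K)⁻¹ := by
      have := (x : Kˣ).ne_zero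
      push_cast
      simp
      field_simp
    rw [this, map_mul, map_inv₀, h3]
    simpa using h2
  have hfin : Finite (UV v ⧸ (LS v).subgroupOf (UV v)) := Finite.of_injective g hg
  refine ⟨Nat.card_pos.ne', (Nat.card_le_card_of_injective g hg).trans (index_sq_le v he)⟩

lemma LS_index (v : HeightOneSpectrum (𝓞 K)) {e : ℕ}
    (he : v.valuation K (2 : K) = WithZero.exp (-(e : ℤ))) :
    (LS v).index ≠ 0 ∧ (LS v).index ≤ 4 * Ideal.absNorm v.asIdeal ^ e := by
  have h := LS_relIndex_UV v he
  have h1 : (LS v).index = (LS v).relIndex (UV v) * 2 := by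
    rw [← Subgroup.relIndex_mul_index (LS_le_EV v), EV_index, EV_eq, Subgroup.relIndex_sup_right]
  constructor
  · rw [h1]; exact mul_ne_zero h.1 (by norm_num)
  · rw [h1]; linarith [h.2]

lemma mul_mem_of_index_le_two {G : Type*} [CommGroup G] {A B : Subgroup G}
    (h0 : A.relIndex B ≠ 0) (h : A.relIndex B ≤ 2) {x y : G} (hx : x ∈ B) (hy : y ∈ B)
    (hx' : x ∉ A) (hy' : y ∉ A) : x * y ∈ A := by
  have h2 : (A.subgroupOf B).index = 2 := by
    change A.relIndex B = 2
    have : A.relIndex B ≠ 1 := by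
      intro h1
      exact hx' (Subgroup.relIndex_eq_one.1 h1 hx)
    omega
  have := (Subgroup.mul_mem_iff_of_index_two h2 (a := ⟨x, hx⟩) (b := ⟨y, hy⟩))
  rw [Subgroup.mem_subgroupOf, Subgroup.mem_subgroupOf, Subgroup.mem_subgroupOf] at this
  exact this.2 (by simp [hx', hy'])

lemma odd_units (v : HeightOneSpectrum (𝓞 K)) (h2 : v.valuation K (2 : K) = 1) {x y : Kˣ}
    (hx : v.valuation K (x : K) = 1) (hy : v.valuation K (y : K) = 1)
    (hx' : x ∉ LS v) (hy' : y ∉ LS v) : x * y ∈ LS v := by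
  have h := LS_relIndex_UV v (e := 0) (by simpa using h2)
  exact mul_mem_of_index_le_two h.1 (by simpa using h.2) (B := UV v) hx hy hx' hy'

lemma odd_units_iff (v : HeightOneSpectrum (𝓞 K)) (h2 : v.valuation K (2 : K) = 1) {x y : Kˣ}
    (hx : v.valuation K (x : K) = 1) (hy : v.valuation K (y : K) = 1) :
    x * y ∈ LS v ↔ (x ∈ LS v ↔ y ∈ LS v) := by
  by_cases h : x ∈ LS v
  · rw [Subgroup.mul_mem_cancel_left _ h]; tauto
  · by_cases h' : y ∈ LS v
    · rw [Subgroup.mul_mem_cancel_right _ h']; tauto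
    · have := odd_units v h2 hx hy h h'; tauto

end FourSq

namespace FourSq
open IsDedekindDomain NumberField

/-- index of the squares -/
noncomputable def sqi (G : Type*) [CommGroup G] : ℕ := (powMonoidHom 2 : G →* G).range.index

lemma sqi_congr {G H : Type*} [CommGroup G] [CommGroup H] (e : G ≃* H) : sqi G = sqi H := by
  unfold sqi
  have : (powMonoidHom 2 : G →* G).range = (powMonoidHom 2 : H →* H).range.comap e.toMonoidHom := by
    ext x
    simp only [MonoidHom.mem_range, Subgroup.mem_comap, powMonoidHom_apply]
    constructor
    · rintro ⟨y, rfl⟩; exact ⟨e y, by simp⟩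
    · rintro ⟨y, hy⟩
      refine ⟨e.symm y, e.injective ?_⟩
      simpa using hy
  rw [this, Subgroup.index_comap_of_surjective _ e.surjective]

lemma sqi_prod (G H : Type*) [CommGroup G] [CommGroup H] : sqi (G × H) = sqi G * sqi H := by
  unfold sqi
  rw [← Subgroup.index_prod]
  congr 1
  ext ⟨x, y⟩
  simp only [MonoidHom.mem_range, Subgroup.mem_prod, powMonoidHom_apply, Prod.exists, Prod.pow_mk, Prod.mk.injEq]
  tauto

lemma sqi_pi (ι G : Type*) [Fintype ι] [CommGroup G] : sqi (ι → G) = sqi G ^ Fintype.card ι := by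
  unfold sqi
  have : (powMonoidHom 2 : (ι → G) →* (ι → G)).range = Subgroup.pi Set.univ (fun _ => (powMonoidHom 2 : G →* G).range) := by
    ext x
    simp only [MonoidHom.mem_range, Subgroup.mem_pi, powMonoidHom_apply, Set.mem_univ, true_imp_iff]
    constructor
    · rintro ⟨y, rfl⟩ i; exact ⟨y i, rfl⟩
    · intro h
      choose y hy using h
      exact ⟨y, funext hy⟩
  rw [this, Subgroup.index_pi]
  simp

lemma sqi_int : sqi (Multiplicative ℤ) = 2 := by
  unfold sqi
  rw [Subgroup.index_eq_two_iff]
  refine ⟨Multiplicative.ofAdd 1, fun b => ?_⟩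
  have key : ∀ c : Multiplicative ℤ, c ∈ (powMonoidHom 2 : Multiplicative ℤ →* Multiplicative ℤ).range ↔ Even (Multiplicative.toAdd c) := by
    intro c
    constructor
    · rintro ⟨y, rfl⟩; simp
    · rintro ⟨n, hn⟩
      refine ⟨Multiplicative.ofAdd n, ?_⟩
      apply Multiplicative.toAdd.injective
      simp [hn, two_mul]
  rw [key, key]
  simp only [toAdd_mul, toAdd_ofAdd]
  rw [Int.even_add_one]
  by_cases h : Even (Multiplicative.toAdd b) <;> simp [h]

variable {K : Type*} [Field K] [NumberField K]

lemma sqi_units : sqi (𝓞 K)ˣ = 2 ^ (Fintype.card (InfinitePlace K)) := by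
  classical
  let f : Units.torsion K × (Fin (Units.rank K) → Multiplicative ℤ) →* (𝓞 K)ˣ :=
    { toFun := fun p => p.1 * ∏ i, (Units.fundSystem K i) ^ (Multiplicative.toAdd (p.2 i))
      map_one' := by simp
      map_mul' := by
        intro p q
        simp only [Prod.fst_mul, Prod.snd_mul, Pi.mul_apply, toAdd_mul, zpow_add, Finset.prod_mul_distrib]
        push_cast
        exact mul_mul_mul_comm _ _ _ _ }
  have hf : Function.Bijective f := by
    rw [Function.bijective_iff_existsUnique]
    intro x
    obtain ⟨p, hp, hu⟩ := Units.exist_unique_eq_mul_prod K x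
    refine ⟨(p.1, fun i => Multiplicative.ofAdd (p.2 i)), hp.symm, ?_⟩
    rintro ⟨q1, q2⟩ hq
    have := hu (q1, fun i => Multiplicative.toAdd (q2 i)) hq.symm
    rw [← this]
    rfl
  rw [← sqi_congr (MulEquiv.ofBijective f hf), sqi_prod, sqi_pi, sqi_int]
  have h1 : sqi (Units.torsion K) = 2 := by
    unfold sqi
    rw [IsCyclic.index_powMonoidHom_range]
    have := Units.even_torsionOrder K
    exact Nat.gcd_eq_right (even_iff_two_dvd.1 this)
  rw [h1, Fintype.card_fin, ← pow_succ']
  congr 1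
  have : 0 < Fintype.card (InfinitePlace K) := Fintype.card_pos
  unfold Units.rank
  omega

lemma US_empty_equiv : Nonempty ((𝓞 K)ˣ ≃* US (∅ : Finset (HeightOneSpectrum (𝓞 K)))) := by
  have h : ∀ x : (𝓞 K)ˣ, Units.map (algebraMap (𝓞 K) K).toMonoidHom x ∈ US (∅ : Finset (HeightOneSpectrum (𝓞 K))) := by
    intro x v _
    show v.valuation K (algebraMap (𝓞 K) K x) = 1
    rw [veq_iff]
    intro hx
    exact v.isPrime.ne_top (Ideal.eq_top_of_isUnit_mem _ hx x.isUnit)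
  refine ⟨MulEquiv.ofBijective ((Units.map (algebraMap (𝓞 K) K).toMonoidHom).codRestrict _ h) ⟨?_, ?_⟩⟩
  · intro x y hxy
    apply Units.ext
    apply FaithfulSMul.algebraMap_injective (𝓞 K) K
    exact congrArg (fun z : US (∅ : Finset (HeightOneSpectrum (𝓞 K))) => ((z : Kˣ) : K)) hxy
  · rintro ⟨x, hx⟩
    obtain ⟨a, ha⟩ := HeightOneSpectrum.mem_integers_of_valuation_le_one (R := 𝓞 K) K (x : K)
      (fun v => (hx v (by simp)).le)
    obtain ⟨b, hb⟩ := HeightOneSpectrum.mem_integers_of_valuation_le_one (R := 𝓞 K) K ((x⁻¹ : Kˣ) : K)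
      (fun v => (inv_mem hx v (by simp)).le)
    have hab : a * b = 1 := by
      apply FaithfulSMul.algebraMap_injective (𝓞 K) K
      rw [map_mul, ha, hb]; simp
    refine ⟨⟨a, b, hab, by rw [mul_comm, hab]⟩, ?_⟩
    apply Subtype.ext
    apply Units.ext
    exact ha

/-- order homomorphism -/
noncomputable def od (v : HeightOneSpectrum (𝓞 K)) : Kˣ →* Multiplicative ℤ := v.valuationOfNeZero

lemma od_eq (v : HeightOneSpectrum (𝓞 K)) (x : Kˣ) : ((od v x : Multiplicative ℤ) : WithZero (Multiplicative ℤ)) = v.valuation K (x : K) :=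
  v.valuationOfNeZero_eq x

lemma od_eq_one (v : HeightOneSpectrum (𝓞 K)) (x : Kˣ) : od v x = 1 ↔ v.valuation K (x : K) = 1 := by
  rw [← od_eq, ← WithZero.coe_one, WithZero.coe_inj]

lemma exists_vunit (v : HeightOneSpectrum (𝓞 K)) :
    ∃ x ∈ US ({v} : Finset (HeightOneSpectrum (𝓞 K))), od v x ≠ 1 := by
  classical
  let c : ClassGroup (𝓞 K) := ClassGroup.mk0 ⟨v.asIdeal, mem_nonZeroDivisors_iff_ne_zero.2 v.ne_bot⟩
  have hc : c ^ Fintype.card (ClassGroup (𝓞 K)) = 1 := pow_card_eq_one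
  have hcard : Fintype.card (ClassGroup (𝓞 K)) ≠ 0 := Fintype.card_ne_zero
  set h := Fintype.card (ClassGroup (𝓞 K))
  rw [← map_pow] at hc
  have := (ClassGroup.mk0_eq_one_iff (I := v.asIdeal ^ h) (mem_nonZeroDivisors_iff_ne_zero.2 (vpow_ne_bot v h))).1
     (by rw [← hc]; rfl)
  obtain ⟨a, ha⟩ := this.principal
  have ha' : v.asIdeal ^ h = Ideal.span {a} := ha
  have ha0 : a ≠ 0 := by
    rintro rfl
    apply vpow_ne_bot v h
    rw [ha']; simp
  have ha0' : algebraMap (𝓞 K) K a ≠ 0 := by simpa using ha0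
  have ham : a ∈ v.asIdeal ^ h := by rw [ha']; exact Ideal.mem_span_singleton_self a
  refine ⟨Units.mk0 _ ha0', ?_, ?_⟩
  · intro w hw
    show w.valuation K (algebraMap (𝓞 K) K a) = 1
    rw [veq_iff]
    intro haw
    apply hw
    rw [Finset.mem_singleton]
    have h1 : v.asIdeal ^ h ≤ w.asIdeal := by
      rw [ha', Ideal.span_singleton_le_iff_mem]; exact haw
    have h2 := w.isPrime.le_of_pow_le h1
    have := v.isMaximal.eq_of_le w.isPrime.ne_top h2
    exact (HeightOneSpectrum.ext this).symm
  · rw [Ne, od_eq_one]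
    show ¬ v.valuation K (algebraMap (𝓞 K) K a) = 1
    rw [veq_iff, not_not]
    exact Ideal.pow_le_self hcard ham

lemma US_insert_equiv [DecidableEq (HeightOneSpectrum (𝓞 K))] (S : Finset (HeightOneSpectrum (𝓞 K))) (v : HeightOneSpectrum (𝓞 K)) (hv : v ∉ S) :
    Nonempty (US S × Multiplicative ℤ ≃* US (insert v S)) := by
  let φ : US (insert v S) →* Multiplicative ℤ := (od v).comp (US (insert v S)).subtype
  obtain ⟨g, hg⟩ := (Subgroup.isCyclic_iff_exists_zpowers_eq_top φ.range).1 inferInstance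
  obtain ⟨t, ht⟩ : g ∈ φ.range := by rw [← hg]; exact Subgroup.mem_zpowers g
  have hg1 : g ≠ 1 := by
    rintro rfl
    obtain ⟨x, hx, hx'⟩ := exists_vunit v
    have : od v x ∈ φ.range := ⟨⟨x, US_mono (by simp) hx⟩, rfl⟩
    rw [← hg, Subgroup.zpowers_one_eq_bot, Subgroup.mem_bot] at this
    exact hx' this
  have hle : US S ≤ US (insert v S) := US_mono (Finset.subset_insert _ _)
  have hker : ∀ b : US S, φ (Subgroup.inclusion hle b) = 1 := by
    intro b
    show od v b = 1
    rw [od_eq_one]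
    exact b.2 v hv
  let f : US S × Multiplicative ℤ →* US (insert v S) :=
    { toFun := fun p => Subgroup.inclusion hle p.1 * t ^ (Multiplicative.toAdd p.2)
      map_one' := by simp
      map_mul' := by
        intro p q
        simp only [Prod.fst_mul, Prod.snd_mul, map_mul, toAdd_mul, zpow_add]
        exact mul_mul_mul_comm _ _ _ _ }
  refine ⟨MulEquiv.ofBijective f ⟨?_, ?_⟩⟩
  · rw [injective_iff_map_eq_one]
    rintro ⟨b, n⟩ h
    have h1 : φ (f (b, n)) = 1 := by rw [h, map_one]
    have h2 : φ (f (b, n)) = g ^ (Multiplicative.toAdd n) := by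
      show φ (Subgroup.inclusion hle b * t ^ (Multiplicative.toAdd n)) = _
      rw [map_mul, hker, one_mul, map_zpow, ht]
    rw [h1] at h2
    have hn : Multiplicative.toAdd n = 0 := by
      by_contra hne
      have := congrArg Multiplicative.toAdd h2
      rw [toAdd_one, toAdd_zpow, smul_eq_mul, eq_comm, mul_eq_zero] at this
      rcases this with h | h
      · exact hne h
      · exact hg1 (by simpa using h)
    have hn' : n = 1 := by simpa using hn
    subst hn'
    have hb : Subgroup.inclusion hle b = 1 := by
      have : f (b, 1) = Subgroup.inclusion hle b := by
        show Subgroup.inclusion hle b * t ^ (Multiplicative.toAdd 1) = _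
        simp
      rw [← this, h]
    have : b = 1 := Subgroup.inclusion_injective hle (by rw [hb, map_one])
    rw [this]; rfl
  · intro a
    have : φ a ∈ Subgroup.zpowers g := by rw [hg]; exact ⟨a, rfl⟩
    obtain ⟨n, hn⟩ := this
    have hm : ((a * (t ^ n)⁻¹ : US (insert v S)) : Kˣ) ∈ US S := by
      intro w hw
      by_cases hwv : w = v
      · subst hwv
        rw [← od_eq_one]
        show φ (a * (t ^ n)⁻¹) = 1
        rw [map_mul, map_inv, map_zpow, ht, ← hn]
        simp
      · exact (a * (t ^ n)⁻¹).2 w (by simp [hw, hwv])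
    refine ⟨(⟨_, hm⟩, Multiplicative.ofAdd n), ?_⟩
    show Subgroup.inclusion hle ⟨_, hm⟩ * t ^ n = a
    apply Subtype.ext
    simp

theorem sqi_US (S : Finset (HeightOneSpectrum (𝓞 K))) :
    sqi (US S) = 2 ^ (S.card + Fintype.card (InfinitePlace K)) := by
  classical
  induction S using Finset.induction_on with
  | empty =>
    obtain ⟨e⟩ := US_empty_equiv (K := K)
    rw [← sqi_congr e, sqi_units]; simp
  | insert v S hv ih =>
    obtain ⟨e⟩ := US_insert_equiv S v hv
    rw [← sqi_congr e, sqi_prod, ih, sqi_int, Finset.card_insert_of_notMem hv]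
    ring

/-- squares of S-units -/
def sqU (S : Finset (HeightOneSpectrum (𝓞 K))) : Subgroup Kˣ := (US S).map (powMonoidHom 2)

lemma sqU_le (S : Finset (HeightOneSpectrum (𝓞 K))) : sqU S ≤ US S := by
  rintro _ ⟨x, hx, rfl⟩
  exact pow_mem hx 2

theorem sqU_relIndex (S : Finset (HeightOneSpectrum (𝓞 K))) :
    (sqU S).relIndex (US S) = 2 ^ (S.card + Fintype.card (InfinitePlace K)) := by
  rw [← sqi_US]
  unfold sqi Subgroup.relIndex
  congr 1
  ext x
  simp only [Subgroup.mem_subgroupOf, sqU, Subgroup.mem_map, MonoidHom.mem_range, powMonoidHom_apply]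
  constructor
  · rintro ⟨y, hy, h⟩
    exact ⟨⟨y, hy⟩, Subtype.ext h⟩
  · rintro ⟨y, hy⟩
    exact ⟨y, y.2, by rw [← hy]; rfl⟩

theorem exists_PrS (S₀ : Finset (HeightOneSpectrum (𝓞 K))) : ∃ S, S₀ ⊆ S ∧ PrS S := by
  classical
  choose R hR using (ClassGroup.mk0_surjective (R := 𝓞 K))
  have hfin : ∀ c : ClassGroup (𝓞 K), {v : HeightOneSpectrum (𝓞 K) | v.asIdeal ∣ (R c : Ideal (𝓞 K))}.Finite :=
    fun c => Ideal.finite_factors (nonZeroDivisors.ne_zero (R c).2)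
  refine ⟨S₀ ∪ Finset.univ.biUnion (fun c => (hfin c).toFinset), Finset.subset_union_left, ?_⟩
  intro I hI
  let I' : nonZeroDivisors (Ideal (𝓞 K)) := ⟨I, mem_nonZeroDivisors_iff_ne_zero.2 hI⟩
  obtain ⟨x, y, hx, hy, h⟩ := (ClassGroup.mk0_eq_mk0_iff (I := I') (J := R (ClassGroup.mk0 I'))).1 (hR _).symm
  have hx' : algebraMap (𝓞 K) K x ≠ 0 := by simpa using hx
  have hy' : algebraMap (𝓞 K) K y ≠ 0 := by simpa using hy
  refine ⟨Units.mk0 _ hy' / Units.mk0 _ hx', fun v hv => ?_⟩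
  have hvR : ¬ (R (ClassGroup.mk0 I') : Ideal (𝓞 K)) ≤ v.asIdeal := by
    intro hle
    apply hv
    rw [Finset.mem_union, Finset.mem_biUnion]
    exact Or.inr ⟨_, Finset.mem_univ _, (hfin _).mem_toFinset.2 (Ideal.dvd_iff_le.2 hle)⟩
  obtain ⟨r, hr, hrv⟩ := SetLike.not_le_iff_exists.1 hvR
  have hr1 := (veq_iff v r).2 hrv
  have hvx := v_ne_zero v hx'
  simp only [Units.val_div_eq_div_val, Units.val_mk0, map_div₀]
  constructor
  · intro a ha
    have : x * a ∈ Ideal.span {y} * (R (ClassGroup.mk0 I') : Ideal (𝓞 K)) := by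
      rw [← h]; exact Ideal.mul_mem_mul (Ideal.mem_span_singleton_self x) ha
    obtain ⟨z, hz, hz'⟩ := Ideal.mem_span_singleton_mul.1 this
    have e := congrArg (fun t => v.valuation K (algebraMap (𝓞 K) K t)) hz'
    simp only [map_mul] at e
    rw [le_div_iff₀ (zero_lt_iff.2 hvx), mul_comm, ← e]
    exact mul_le_of_le_one_right' (vle v z)
  · have : y * r ∈ Ideal.span {x} * I := by
      change y * r ∈ Ideal.span {x} * (I' : Ideal (𝓞 K))
      rw [h]; exact Ideal.mul_mem_mul (Ideal.mem_span_singleton_self y) hr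
    obtain ⟨i, hi, hi'⟩ := Ideal.mem_span_singleton_mul.1 this
    refine ⟨i, hi, ?_⟩
    have e := congrArg (fun t => v.valuation K (algebraMap (𝓞 K) K t)) hi'
    simp only [map_mul, hr1, mul_one] at e
    rw [eq_div_iff hvx, mul_comm, e]

theorem LS_inf_index (S : Finset (HeightOneSpectrum (𝓞 K))) :
    (⨅ v : S, LS (v : HeightOneSpectrum (𝓞 K))).index ≠ 0 ∧
    (⨅ v : S, LS (v : HeightOneSpectrum (𝓞 K))).index ≤ 4 ^ S.card * 2 ^ Module.finrank ℚ K := by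
  classical
  choose e he using (fun v : HeightOneSpectrum (𝓞 K) => exists_e2 v)
  constructor
  · exact Subgroup.index_iInf_ne_zero (fun v => (LS_index v.1 (he v.1)).1)
  refine (Subgroup.index_iInf_le _).trans ?_
  have h1 : ∏ v : S, (LS (v : HeightOneSpectrum (𝓞 K))).index ≤ ∏ v : S, (4 * Ideal.absNorm v.1.asIdeal ^ e v.1) :=
    Finset.prod_le_prod' (fun v _ => (LS_index v.1 (he v.1)).2)
  refine h1.trans ?_
  rw [Finset.prod_mul_distrib, Finset.prod_const, Finset.card_univ, Fintype.card_coe]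
  refine Nat.mul_le_mul_left _ ?_
  have h2 : ∏ v : S, v.1.asIdeal ^ e v.1 ∣ Ideal.span {(2 : 𝓞 K)} := by
    apply Finset.prod_dvd_of_coprime
    · intro v _ w _ hvw
      apply IsCoprime.pow
      rw [Ideal.isCoprime_iff_sup_eq]
      exact v.1.isMaximal.coprime_of_ne w.1.isMaximal (fun h => hvw (Subtype.ext (HeightOneSpectrum.ext h)))
    · intro v _
      rw [Ideal.dvd_iff_le, Ideal.span_singleton_le_iff_mem, ← vpow_iff, map_ofNat, he]
  have h3 := Ideal.absNorm_dvd_absNorm_of_le (Ideal.dvd_iff_le.1 h2)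
  have h4 : Ideal.absNorm (Ideal.span {(2 : 𝓞 K)}) = 2 ^ Module.finrank ℚ K := by
    have := Ideal.absNorm_span_natCast (S := 𝓞 K) 2
    rw [RingOfIntegers.rank] at this
    exact_mod_cast this
  rw [h4, map_prod] at h3
  simp only [map_pow] at h3
  exact Nat.le_of_dvd (by positivity) h3

end FourSq

namespace FourSq
open IsDedekindDomain NumberField

section pullback
variable {K : Type*} [Field K] [NumberField K] {L : Type*} [Field L] [NumberField L]

lemma exists_pb (f : K →+* L) (w : HeightOneSpectrum (𝓞 L)) :
    ∃ v : HeightOneSpectrum (𝓞 K), ∃ e : ℕ, e ≠ 0 ∧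
      ∀ x : K, v.valuation K x ^ e = w.valuation L (f x) := by
  let _ := f.toAlgebra
  have : w.asIdeal.LiesOver (w.under (𝓞 K)).asIdeal := ⟨rfl⟩
  refine ⟨w.under (𝓞 K), _, ?_, fun x => HeightOneSpectrum.valuation_liesOver L (w.under (𝓞 K)) w x⟩
  exact Ideal.IsDedekindDomain.ramificationIdx'_ne_zero_of_liesOver w.asIdeal (w.under (𝓞 K)).ne_bot

/-- the prime below -/
noncomputable def pb (f : K →+* L) (w : HeightOneSpectrum (𝓞 L)) : HeightOneSpectrum (𝓞 K) :=
  (exists_pb f w).choose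

lemma pb_spec (f : K →+* L) (w : HeightOneSpectrum (𝓞 L)) : ∃ e : ℕ, e ≠ 0 ∧
      ∀ x : K, (pb f w).valuation K x ^ e = w.valuation L (f x) := (exists_pb f w).choose_spec

lemma pb_le_iff (f : K →+* L) (w : HeightOneSpectrum (𝓞 L)) (x y : K) :
    w.valuation L (f x) ≤ w.valuation L (f y) ↔ (pb f w).valuation K x ≤ (pb f w).valuation K y := by
  obtain ⟨e, he, h⟩ := pb_spec f w
  rw [← h, ← h, pow_le_pow_iff_left₀ zero_le zero_le he]

lemma pb_lt_iff (f : K →+* L) (w : HeightOneSpectrum (𝓞 L)) (x y : K) :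
    w.valuation L (f x) < w.valuation L (f y) ↔ (pb f w).valuation K x < (pb f w).valuation K y := by
  rw [← not_le, ← not_le, pb_le_iff]

lemma pb_lt_one_iff (f : K →+* L) (w : HeightOneSpectrum (𝓞 L)) (x : K) :
    w.valuation L (f x) < 1 ↔ (pb f w).valuation K x < 1 := by
  have := pb_lt_iff f w x 1
  simpa using this

lemma pb_eq_iff (f : K →+* L) (w : HeightOneSpectrum (𝓞 L)) (x y : K) :
    w.valuation L (f x) = w.valuation L (f y) ↔ (pb f w).valuation K x = (pb f w).valuation K y := by
  rw [le_antisymm_iff, le_antisymm_iff, pb_le_iff, pb_le_iff]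

lemma pb_eq_one_iff (f : K →+* L) (w : HeightOneSpectrum (𝓞 L)) (x : K) :
    w.valuation L (f x) = 1 ↔ (pb f w).valuation K x = 1 := by
  have := pb_eq_iff f w x 1
  simpa using this

lemma prime_ext {v v' : HeightOneSpectrum (𝓞 K)}
    (h : ∀ x : K, v.valuation K x < 1 ↔ v'.valuation K x < 1) : v = v' := by
  apply HeightOneSpectrum.ext
  ext a
  rw [← vlt_iff, h, vlt_iff]

lemma pb_unique (f : K →+* L) (w : HeightOneSpectrum (𝓞 L)) (v : HeightOneSpectrum (𝓞 K))
    (h : ∀ x : K, w.valuation L (f x) < 1 ↔ v.valuation K x < 1) : pb f w = v := by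
  apply prime_ext
  intro x
  rw [← h, pb_lt_one_iff]

lemma pb_surj (f : K →+* L) (v : HeightOneSpectrum (𝓞 K)) : ∃ w, pb f w = v := by
  let _ := f.toAlgebra
  have := v.isMaximal
  obtain ⟨P, hP, hPv⟩ := Ideal.exists_maximal_ideal_liesOver_of_isIntegral (S := 𝓞 L) v.asIdeal
  let w : HeightOneSpectrum (𝓞 L) := ⟨P, hP.isPrime, Ideal.ne_bot_of_liesOver_of_ne_bot v.ne_bot P⟩
  have : w.asIdeal.LiesOver v.asIdeal := hPv
  refine ⟨w, pb_unique _ _ _ fun x => ?_⟩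
  have h := HeightOneSpectrum.valuation_liesOver L v w x
  change _ = w.valuation L (f x) at h
  rw [← h, pow_lt_one_iff_of_nonneg zero_le (Ideal.IsDedekindDomain.ramificationIdx'_ne_zero_of_liesOver w.asIdeal v.ne_bot)]

lemma pb_finite (f : K →+* L) (v : HeightOneSpectrum (𝓞 K)) : {w | pb f w = v}.Finite := by
  obtain ⟨a, ha, ha0⟩ := Submodule.exists_mem_ne_zero_of_ne_bot v.ne_bot
  have hb : RingOfIntegers.mapRingHom f a ≠ 0 := by
    intro h
    apply ha0
    have := congrArg (algebraMap (𝓞 L) L) h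
    rw [map_zero] at this
    change f (algebraMap (𝓞 K) K a) = 0 at this
    simpa using this
  have hI : Ideal.span {RingOfIntegers.mapRingHom f a} ≠ ⊥ := by simpa using hb
  refine (Ideal.finite_factors hI).subset ?_
  rintro w rfl
  rw [Set.mem_ofPred_eq, Ideal.dvd_iff_le, Ideal.span_singleton_le_iff_mem, ← vlt_iff]
  change w.valuation L (f (algebraMap (𝓞 K) K a)) < 1
  rw [pb_lt_one_iff, vlt_iff]
  exact ha

lemma pb_finite' (f : K →+* L) (S : Finset (HeightOneSpectrum (𝓞 K))) : {w | pb f w ∈ S}.Finite := by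
  have : {w | pb f w ∈ S} = ⋃ v ∈ S, {w | pb f w = v} := by ext; simp
  rw [this]
  exact S.finite_toSet.biUnion (fun v _ => pb_finite f v)

/-- primes above S -/
noncomputable def SL (f : K →+* L) (S : Finset (HeightOneSpectrum (𝓞 K))) : Finset (HeightOneSpectrum (𝓞 L)) :=
  (pb_finite' f S).toFinset

lemma mem_SL (f : K →+* L) (S : Finset (HeightOneSpectrum (𝓞 K))) (w) : w ∈ SL f S ↔ pb f w ∈ S := by
  simp [SL]

end pullback

/-- quadratic extension data -/
structure QE (K L : Type*) [Field K] [Field L] [Algebra K L] (u : K) where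
  r : L
  hr : r ^ 2 = algebraMap K L u
  rep : ∀ z : L, ∃ a b : K, z = algebraMap K L a + algebraMap K L b * r
  σ : L →+* L
  σK : ∀ a : K, σ (algebraMap K L a) = algebraMap K L a
  σr : σ r = -r
  fr : Module.finrank K L = 2

open Polynomial in
theorem exists_QE.{w} {K : Type w} [Field K] [NumberField K] {u : K} (hu : ¬ IsSquare u) :
    ∃ (L : Type w) (_ : Field L) (_ : NumberField L) (_ : Algebra K L), Nonempty (QE K L u) := by
  set f : K[X] := X ^ 2 - C u with hf
  have hdeg : f.natDegree = 2 := by rw [hf]; compute_degree!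
  have hmon : f.Monic := by rw [hf]; monicity!
  have hirr : Irreducible f := by
    refine (Polynomial.irreducible_iff_roots_eq_zero_of_degree_le_three (by omega) (by omega)).2 ?_
    rw [Multiset.eq_zero_iff_forall_notMem]
    intro x hx
    rw [mem_roots hmon.ne_zero, IsRoot, hf] at hx
    simp [sub_eq_zero] at hx
    exact hu ⟨x, by rw [← hx, sq]⟩
  have : Fact (Irreducible f) := ⟨hirr⟩
  have hfin : Module.Finite K (AdjoinRoot f) := hmon.finite_adjoinRoot
  have hch : CharZero (AdjoinRoot f) := charZero_of_injective_algebraMap (algebraMap K (AdjoinRoot f)).injective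
  have hnf : NumberField (AdjoinRoot f) := @NumberField.mk _ _ hch (Module.Finite.trans K (AdjoinRoot f))
  have hroot : (AdjoinRoot.root f) ^ 2 = algebraMap K (AdjoinRoot f) u := by
    have := AdjoinRoot.eval₂_root f
    rw [hf] at this
    simp only [eval₂_sub, eval₂_pow, eval₂_X, eval₂_C, sub_eq_zero] at this
    exact this
  refine ⟨AdjoinRoot f, inferInstance, hnf, inferInstance, ⟨⟨AdjoinRoot.root f, hroot, ?_, 
    AdjoinRoot.lift (algebraMap K (AdjoinRoot f)) (- AdjoinRoot.root f) ?_, ?_, ?_, ?_⟩⟩⟩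
  · intro z
    obtain ⟨p, rfl⟩ := AdjoinRoot.mk_surjective z
    have h1 : AdjoinRoot.mk f p = AdjoinRoot.mk f (p %ₘ f) := by
      rw [AdjoinRoot.mk_eq_mk]
      refine ⟨p /ₘ f, ?_⟩
      have := modByMonic_add_div p f
      linear_combination -this
    have h2 : (p %ₘ f).natDegree ≤ 1 := by
      have := natDegree_modByMonic_lt p hmon (by intro h; rw [h] at hdeg; simp at hdeg)
      omega
    obtain ⟨b, a, hab⟩ := exists_eq_X_add_C_of_natDegree_le_one h2
    refine ⟨a, b, ?_⟩
    rw [h1, hab]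
    simp only [map_add, map_mul, AdjoinRoot.mk_X, AdjoinRoot.mk_C, AdjoinRoot.algebraMap_eq]
    ring
  · simp [hf, hroot]
  · intro a
    exact AdjoinRoot.lift_of _
  · exact AdjoinRoot.lift_root _
  · rw [(AdjoinRoot.powerBasis hmon.ne_zero).finrank, AdjoinRoot.powerBasis_dim, hdeg]

end FourSq

namespace FourSq
open IsDedekindDomain NumberField

section lem1
variable {K : Type*} [Field K] [NumberField K] {L : Type*} [Field L] [NumberField L] [Algebra K L]

lemma QE.σσ {u : K} (q : QE K L u) (z : L) : q.σ (q.σ z) = z := by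
  obtain ⟨a, b, rfl⟩ := q.rep z
  simp [q.σK, q.σr]

lemma QE.norm_mem {u : K} (q : QE K L u) (z : L) :
    ∃ a b : K, z * q.σ z = algebraMap K L (a ^ 2 - u * b ^ 2) := by
  obtain ⟨a, b, rfl⟩ := q.rep z
  refine ⟨a, b, ?_⟩
  simp only [map_add, map_mul, q.σK, q.σr, map_sub, map_pow, ← q.hr]
  ring

lemma QE.pb_σ {u : K} (q : QE K L u) (w : HeightOneSpectrum (𝓞 L)) :
    pb (algebraMap K L) (pb q.σ w) = pb (algebraMap K L) w := by
  apply pb_unique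
  intro x
  rw [← pb_lt_one_iff q.σ, q.σK, pb_lt_one_iff]

lemma QE.σ_mem {u : K} (q : QE K L u) (S : Finset (HeightOneSpectrum (𝓞 K))) (y : Lˣ)
    (hy : y ∈ US (SL (algebraMap K L) S)) : Units.map (q.σ : L →* L) y ∈ US (SL (algebraMap K L) S) := by
  intro w hw
  change w.valuation L (q.σ y) = 1
  rw [pb_eq_one_iff]
  apply hy
  rwa [mem_SL, q.pb_σ, ← mem_SL]

lemma QE.pb_σ_ne {u : Kˣ} (q : QE K L (u : K)) (w : HeightOneSpectrum (𝓞 L))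
    (hu : u ∈ LS (pb (algebraMap K L) w)) : pb q.σ w ≠ w := by
  intro h
  obtain ⟨y, hy⟩ := hu
  rw [← pb_lt_iff (algebraMap K L)] at hy
  set θ : L := (1 + q.r * algebraMap K L y) / 2 with hθ
  set θ' : L := (1 - q.r * algebraMap K L y) / 2 with hθ'
  have hs : q.σ θ = θ' := by
    rw [hθ, hθ']
    simp [q.σr, q.σK, sub_eq_add_neg, map_ofNat]
  have hsum : θ + θ' = 1 := by rw [hθ, hθ']; ring
  have hprod : θ * θ' * 4 = - algebraMap K L (u * (y:K) ^ 2 - 1) := by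
    rw [hθ, hθ']; simp only [map_sub, map_mul, map_pow, map_one, ← q.hr]; ring
  have hlt : w.valuation L (θ * θ') < 1 := by
    have h5 : w.valuation L (θ * θ') * w.valuation L 4 < 1 * w.valuation L 4 := by
      rw [← map_mul, hprod, Valuation.map_neg]
      simpa [map_ofNat] using hy
    exact lt_of_mul_lt_mul_right' h5
  have hiff : w.valuation L θ' < 1 ↔ w.valuation L θ < 1 := by
    rw [← hs, pb_lt_one_iff, h]
  rw [map_mul] at hlt
  have h6 : w.valuation L θ < 1 := by
    by_contra hc
    have hc' : ¬ w.valuation L θ' < 1 := by rwa [hiff]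
    exact absurd hlt (not_lt.2 (one_le_mul (not_lt.1 hc) (not_lt.1 hc')))
  have h7 := Valuation.map_add_lt (w.valuation L) h6 (hiff.2 h6)
  rw [hsum, map_one] at h7
  exact lt_irrefl _ h7

lemma QE.card_SL {u : Kˣ} (q : QE K L (u : K)) (S Sp : Finset (HeightOneSpectrum (𝓞 K))) (hSp : Sp ⊆ S)
    (hu : ∀ v ∈ Sp, u ∈ LS v) : S.card + Sp.card ≤ (SL (algebraMap K L) S).card := by
  classical
  rw [Finset.card_eq_sum_card_fiberwise (f := pb (algebraMap K L)) (t := S)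
    (fun w hw => (mem_SL _ _ _).1 hw)]
  have : S.card + Sp.card = ∑ v ∈ S, (1 + if v ∈ Sp then 1 else 0) := by
    rw [Finset.sum_add_distrib, Finset.sum_ite_mem, Finset.inter_eq_right.2 hSp]; simp
  rw [this]
  refine Finset.sum_le_sum fun v hv => ?_
  obtain ⟨w, hw⟩ := pb_surj (algebraMap K L) v
  split_ifs with hvp
  · change 1 < _
    rw [Finset.one_lt_card]
    refine ⟨w, ?_, pb q.σ w, ?_, ?_⟩
    · simp [mem_SL, hw, hv]
    · simp [mem_SL, hw, hv, q.pb_σ]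
    · exact (q.pb_σ_ne w (hw ▸ hu v hvp)).symm
  · change 0 < _
    rw [Finset.card_pos]
    exact ⟨w, by simp [mem_SL, hw, hv]⟩

lemma exists_common (α β : K) : ∃ a b d : 𝓞 K, d ≠ 0 ∧
    α * algebraMap (𝓞 K) K d = algebraMap (𝓞 K) K a ∧ β * algebraMap (𝓞 K) K d = algebraMap (𝓞 K) K b := by
  obtain ⟨a, b, hb, h⟩ := exists_frac α
  obtain ⟨a', b', hb', h'⟩ := exists_frac β
  have h1 : algebraMap (𝓞 K) K b ≠ 0 := by simpa using hb
  have h2 : algebraMap (𝓞 K) K b' ≠ 0 := by simpa using hb'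
  refine ⟨a * b', a' * b, b * b', mul_ne_zero hb hb', ?_, ?_⟩
  · rw [h, map_mul, map_mul]; field_simp
  · rw [h', map_mul, map_mul]; field_simp

lemma QE.H1 {u : Kˣ} (q : QE K L (u : K)) (S : Finset (HeightOneSpectrum (𝓞 K)))
    (h2 : ∀ v ∉ S, v.valuation K (2:K) = 1) (hP : PrS S) (hu : u ∈ US S) (y : Lˣ)
    (hy : y ∈ US (SL (algebraMap K L) S)) (hn : (y : L) * q.σ y = 1) :
    ∃ z ∈ US (SL (algebraMap K L) S), (y : L) * q.σ z = z := by
  have hr0 : q.r ≠ 0 := by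
    intro h
    have := q.hr
    rw [h] at this
    have h3 : (u : K) ≠ 0 := u.ne_zero
    rw [zero_pow two_ne_zero, eq_comm, map_eq_zero] at this
    exact h3 this
  -- Step 1
  obtain ⟨z0, hz0, hyz0⟩ : ∃ z0 : L, z0 ≠ 0 ∧ (y:L) * q.σ z0 = z0 := by
    by_cases hc : (1 + y : L) = 0
    · refine ⟨q.r, hr0, ?_⟩
      rw [q.σr, eq_neg_of_add_eq_zero_right hc]; ring
    · refine ⟨1 + y, hc, ?_⟩
      rw [map_add, map_one, mul_add, hn]; ring
  obtain ⟨α, β, rfl⟩ := q.rep z0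
  obtain ⟨a, b, d, hd, had, hbd⟩ := exists_common α β
  set z : L := algebraMap K L (algebraMap _ K a) + algebraMap K L (algebraMap _ K b) * q.r with hz
  have hzd : z = (algebraMap K L α + algebraMap K L β * q.r) * algebraMap K L (algebraMap _ K d) := by
    rw [hz, ← had, ← hbd]; simp only [map_mul]; ring
  have hd' : algebraMap K L (algebraMap (𝓞 K) K d) ≠ 0 := by simpa using hd
  have hz_ne : z ≠ 0 := by rw [hzd]; exact mul_ne_zero hz0 hd'
  have hyz : (y:L) * q.σ z = z := by
    conv_rhs => rw [hzd, ← hyz0]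
    rw [hzd, map_mul, q.σK]; ring
  have hI : Ideal.span {a, b} ≠ ⊥ := by
    intro h
    rw [Ideal.span_eq_bot] at h
    have ha := h a (by simp)
    have hb := h b (by simp)
    apply hz_ne
    rw [hz, ha, hb]; simp
  obtain ⟨c, hc⟩ := hP _ hI
  have hcz : ∀ w ∉ SL (algebraMap K L) S, w.valuation L z = w.valuation L (algebraMap K L c) := by
    intro w hw
    have hw' : pb (algebraMap K L) w ∉ S := by rwa [← mem_SL]
    obtain ⟨hc1, i, hi, hic⟩ := hc _ hw'
    have hwr : w.valuation L q.r = 1 := by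
      have h1 : w.valuation L (q.r ^ 2) = 1 := by
        rw [q.hr, pb_eq_one_iff]; exact hu _ hw'
      rw [map_pow] at h1
      exact (pow_eq_one_iff_of_nonneg zero_le two_ne_zero).1 h1
    have hw2 : w.valuation L 2 = 1 := by
      have h1 := h2 _ hw'
      rw [← pb_eq_one_iff (algebraMap K L)] at h1
      simpa [map_ofNat] using h1
    have hσ : w.valuation L (q.σ z) = w.valuation L z := by
      conv_rhs => rw [← hyz, map_mul, hy w hw, one_mul]
    have hσz : q.σ z = algebraMap K L (algebraMap _ K a) - algebraMap K L (algebraMap _ K b) * q.r := by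
      rw [hz]; simp [q.σK, q.σr, sub_eq_add_neg]
    have ha : w.valuation L (algebraMap K L (algebraMap _ K a)) ≤ w.valuation L z := by
      have : w.valuation L (2 * algebraMap K L (algebraMap _ K a)) ≤ w.valuation L z := by
        have e : 2 * algebraMap K L (algebraMap _ K a) = z + q.σ z := by rw [hσz, hz]; ring
        rw [e]
        exact Valuation.map_add_le _ le_rfl hσ.le
      rwa [map_mul, hw2, one_mul] at this
    have hb : w.valuation L (algebraMap K L (algebraMap _ K b)) ≤ w.valuation L z := by
      have : w.valuation L (2 * (algebraMap K L (algebraMap _ K b) * q.r)) ≤ w.valuation L z := by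
        have e : 2 * (algebraMap K L (algebraMap _ K b) * q.r) = z - q.σ z := by rw [hσz, hz]; ring
        rw [e]
        exact Valuation.map_sub_le _ le_rfl hσ.le
      rwa [map_mul, hw2, one_mul, map_mul, hwr, mul_one] at this
    apply le_antisymm
    · rw [hz]
      refine Valuation.map_add_le _ ?_ ?_
      · rw [pb_le_iff]; exact hc1 a (Ideal.subset_span (by simp))
      · rw [map_mul, hwr, mul_one, pb_le_iff]; exact hc1 b (Ideal.subset_span (by simp))
    · rw [← pb_eq_iff (algebraMap K L)] at hic
      rw [← hic]
      obtain ⟨x1, x2, rfl⟩ := Ideal.mem_span_pair.1 hi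
      rw [map_add, map_mul, map_mul, map_add, map_mul, map_mul]
      have hle : ∀ x : 𝓞 K, w.valuation L (algebraMap K L (algebraMap _ K x)) ≤ 1 := by
        intro x
        have := (pb_le_iff (algebraMap K L) w (algebraMap _ K x) 1).2 (by simpa using vle _ x)
        simpa using this
      refine Valuation.map_add_le _ ?_ ?_
      · rw [map_mul]; exact (mul_le_of_le_one_left' (hle x1)).trans ha
      · rw [map_mul]; exact (mul_le_of_le_one_left' (hle x2)).trans hb
  have hcL : algebraMap K L (c : K) ≠ 0 := by simp
  refine ⟨Units.mk0 (z / algebraMap K L c) (div_ne_zero hz_ne hcL), ?_, ?_⟩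
  · intro w hw
    rw [Units.val_mk0, map_div₀, hcz w hw, div_self]
    exact v_ne_zero w hcL
  · rw [Units.val_mk0, map_div₀, q.σK, ← mul_div_assoc, hyz]

end lem1

/-- abstract index bookkeeping -/
lemma index_count {G M : Type*} [CommGroup G] [CommGroup M] (j : G →* M) (hj : Function.Injective j)
    (N : M →* M) (A sA : Subgroup M) (B sB : Subgroup G) (V : Subgroup G)
    (hsA : sA ≤ A) (hjB : ∀ b ∈ B, j b ∈ A) (hsB : ∀ b ∈ sB, j b ∈ sA)
    (hsBB : sB ≤ B)
    (hNA : ∀ y ∈ A, ∃ x ∈ B, x ∈ V ∧ j x = N y)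
    (hNAB : ∀ x, (∃ y ∈ A, N y = j x) → x ∈ B ∧ x ∈ V)
    (hNs : ∀ x ∈ sB, ∃ y ∈ A, N y = j x)
    (hH : ∀ y ∈ A, N y ∈ sB.map j → y ∈ B.map j ⊔ sA)
    (u : G) (huB : u ∈ B) (hus : u ∉ sB) (huA : j u ∈ sA)
    (a p l ρ : ℕ) (hl : a + p ≤ l) (hB : sB.relIndex B = 2 ^ (a + ρ)) (hA : sA.relIndex A = 2 ^ (l + 2 * ρ)) :
    V.relIndex B ≠ 0 ∧ V.relIndex B * 2 ^ (p + 1) ≤ 2 ^ a := by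
  set NA : Subgroup G := (A.map N).comap j with hNAdef
  have hmap : NA.map j = A.map N := by
    apply le_antisymm
    · exact Subgroup.map_comap_le _ _
    · rintro _ ⟨y, hy, rfl⟩
      obtain ⟨x, hx, _, hxy⟩ := hNA y hy
      exact ⟨x, ⟨y, hy, hxy.symm⟩, hxy⟩
  set W : Subgroup M := B.map j ⊔ sA with hW
  have hWA : W ≤ A := sup_le (by rintro _ ⟨b, hb, rfl⟩; exact hjB b hb) hsA
  have hNAB' : NA ≤ B := fun x hx => (hNAB x hx).1
  have hNAV : NA ≤ V := fun x hx => (hNAB x hx).2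
  have hsNA : sB ≤ NA := fun x hx => hNs x hx
  have e1 : sB.relIndex NA = ((sB.map j).comap N).relIndex A := by
    rw [Subgroup.relIndex_comap, ← hmap, Subgroup.relIndex_map_map_of_injective _ _ hj]
  have e2 : sB.relIndex NA * NA.relIndex B = 2 ^ (a + ρ) := by
    rw [← hB, Subgroup.relIndex_mul_relIndex _ _ _ hsNA hNAB']
  have hn1 : sB.relIndex NA ≠ 0 := fun h => by rw [h] at e2; simp only [zero_mul, mul_zero] at e2; exact absurd e2.symm (by positivity)
  have hn2 : NA.relIndex B ≠ 0 := fun h => by rw [h] at e2; simp only [zero_mul, mul_zero] at e2; exact absurd e2.symm (by positivity)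
  have e3 : W.relIndex A ≤ sB.relIndex NA := by
    apply Nat.le_of_dvd (Nat.pos_of_ne_zero hn1)
    rw [e1, ← Subgroup.inf_relIndex_right (Subgroup.comap N _)]
    apply Subgroup.relIndex_dvd_of_le_left
    intro y hy
    exact hH y hy.2 hy.1
  have e4 : V.relIndex B ∣ NA.relIndex B := Subgroup.relIndex_dvd_of_le_left B hNAV
  have e4' : V.relIndex B ≤ NA.relIndex B := Nat.le_of_dvd (Nat.pos_of_ne_zero hn2) e4
  have e5 : sA.relIndex W * W.relIndex A = 2 ^ (l + 2 * ρ) := by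
    rw [← hA, Subgroup.relIndex_mul_relIndex _ _ _ le_sup_right hWA]
  set C : Subgroup G := sA.comap j ⊓ B with hC
  have e6 : sA.relIndex W = C.relIndex B := by
    rw [hW, Subgroup.relIndex_sup_right, hC, Subgroup.inf_relIndex_right, Subgroup.relIndex_comap]
  have hsC : sB ≤ C := le_inf (fun b hb => hsB b hb) hsBB
  have e7 : sB.relIndex C * C.relIndex B = 2 ^ (a + ρ) := by
    rw [← hB, Subgroup.relIndex_mul_relIndex _ _ _ hsC inf_le_right]
  have e8 : 2 ≤ sB.relIndex C := by
    have h0 : sB.relIndex C ≠ 0 := fun h => by rw [h] at e7; simp only [zero_mul, mul_zero] at e7; exact absurd e7.symm (by positivity)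
    have h1 : sB.relIndex C ≠ 1 := fun h => hus (Subgroup.relIndex_eq_one.1 h ⟨huA, huB⟩)
    omega
  refine ⟨fun h => hn2 (Nat.eq_zero_of_zero_dvd (h ▸ e4)), ?_⟩
  rw [e6] at e5
  have f1 : 2 * C.relIndex B ≤ 2 ^ (a + ρ) := by rw [← e7]; gcongr
  have f2 : NA.relIndex B * W.relIndex A ≤ 2 ^ (a + ρ) := by
    rw [← e2, mul_comm]; gcongr
  have f3 : 2 ^ (a + p + 2 * ρ) ≤ C.relIndex B * W.relIndex A := by
    rw [e5]; gcongr; norm_num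
  have f4 : (NA.relIndex B * 2 ^ (p + 1)) * 2 ^ (a + 2 * ρ) ≤ 2 ^ a * 2 ^ (a + 2 * ρ) := by
    calc _ = NA.relIndex B * (2 * 2 ^ (a + p + 2 * ρ)) := by ring
      _ ≤ NA.relIndex B * (2 * (C.relIndex B * W.relIndex A)) := by gcongr
      _ = (NA.relIndex B * W.relIndex A) * (2 * C.relIndex B) := by ring
      _ ≤ 2 ^ (a + ρ) * 2 ^ (a + ρ) := by gcongr
      _ = _ := by ring
  have f5 := Nat.le_of_mul_le_mul_right f4 (by positivity)
  exact (Nat.mul_le_mul_right _ e4').trans f5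

lemma card_places {K : Type*} [Field K] [NumberField K] [IsTotallyComplex K] :
    Fintype.card (InfinitePlace K) = InfinitePlace.nrComplexPlaces K := by
  rw [InfinitePlace.card_eq_nrRealPlaces_add_nrComplexPlaces, IsTotallyComplex.nrRealPlaces_eq_zero, zero_add]

theorem lemma1 {K : Type*} [Field K] [NumberField K] [IsTotallyComplex K]
    (S Sp : Finset (HeightOneSpectrum (𝓞 K)))
    (h2 : ∀ v ∉ S, v.valuation K (2:K) = 1) (hP : PrS S) (u : Kˣ) (hu : u ∈ US S)
    (hns : ¬ IsSquare (u : K)) (hSp : Sp ⊆ S) (hl : ∀ v ∈ Sp, u ∈ LS v) :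
    (NV (u : K)).relIndex (US S) ≠ 0 ∧ (NV (u : K)).relIndex (US S) * 2 ^ (Sp.card + 1) ≤ 2 ^ S.card := by
  obtain ⟨L, _, _, _, ⟨q⟩⟩ := exists_QE hns
  have htc : IsTotallyComplex L := isTotallyComplex_of_algebra K L
  have hplaces : Fintype.card (InfinitePlace L) = 2 * Fintype.card (InfinitePlace K) := by
    have h1 := IsTotallyComplex.finrank (K := K)
    have h2 := IsTotallyComplex.finrank (K := L)
    have h3 := Module.finrank_mul_finrank ℚ K L
    rw [q.fr] at h3
    rw [card_places, card_places]
    omega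
  set j : Kˣ →* Lˣ := Units.map (algebraMap K L : K →* L) with hj
  have hjinj : Function.Injective j := Units.map_injective (algebraMap K L).injective
  set N : Lˣ →* Lˣ := MonoidHom.id Lˣ * Units.map (q.σ : L →* L) with hN
  have hNval : ∀ y : Lˣ, ((N y : Lˣ) : L) = y * q.σ y := fun y => rfl
  have hjval : ∀ y : Kˣ, ((j y : Lˣ) : L) = algebraMap K L y := fun y => rfl
  have hjB : ∀ x : Kˣ, j x ∈ US (SL (algebraMap K L) S) ↔ x ∈ US S := by
    intro x
    constructor
    · intro h v hv
      obtain ⟨w, rfl⟩ := pb_surj (algebraMap K L) v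
      rw [← pb_eq_one_iff]
      exact h w (by rwa [mem_SL])
    · intro h w hw
      rw [hjval, pb_eq_one_iff]
      exact h _ (by rwa [mem_SL] at hw)
  have hNmem : ∀ y ∈ US (SL (algebraMap K L) S), N y ∈ US (SL (algebraMap K L) S) :=
    fun y hy => mul_mem hy (q.σ_mem S y hy)
  have hNV : ∀ y : Lˣ, ∀ x : Kˣ, N y = j x → x ∈ NV (u : K) := by
    intro y x h
    obtain ⟨a, b, hab⟩ := q.norm_mem y
    refine ⟨a, b, (algebraMap K L).injective ?_⟩
    rw [← hab, ← hjval, ← h, hNval]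
  have hNex : ∀ y : Lˣ, ∃ x : Kˣ, j x = N y := by
    intro y
    obtain ⟨a, b, hab⟩ := q.norm_mem y
    refine ⟨Units.mk0 (a ^ 2 - u * b ^ 2) ?_, ?_⟩
    · intro h
      rw [h, map_zero, ← hNval] at hab
      exact (N y).ne_zero hab
    · ext
      rw [hjval, Units.val_mk0, ← hab, hNval]
  refine index_count j hjinj N (US (SL (algebraMap K L) S)) (sqU (SL (algebraMap K L) S)) (US S) (sqU S)
    (NV (u : K)) (sqU_le _) (fun b hb => (hjB b).2 hb) ?_ (sqU_le _) ?_ ?_ ?_ ?_ u hu ?_ ?_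
    S.card Sp.card (SL (algebraMap K L) S).card (Fintype.card (InfinitePlace K)) (q.card_SL S Sp hSp hl) (sqU_relIndex S)
    (by rw [sqU_relIndex, hplaces])
  · rintro _ ⟨b, hb, rfl⟩
    exact ⟨j b, (hjB b).2 hb, by simp⟩
  · intro y hy
    obtain ⟨x, hx⟩ := hNex y
    exact ⟨x, (hjB x).1 (hx ▸ hNmem y hy), hNV y x hx.symm, hx⟩
  · rintro x ⟨y, hy, h⟩
    exact ⟨(hjB x).1 (h ▸ hNmem y hy), hNV y x h⟩
  · rintro _ ⟨b, hb, rfl⟩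
    refine ⟨j b, (hjB b).2 hb, ?_⟩
    ext
    rw [hNval, hjval, hjval, q.σK]
    simp [sq]
  · rintro y hy ⟨_, ⟨b, hb, rfl⟩, hby⟩
    have hb' : j b ∈ US (SL (algebraMap K L) S) := (hjB b).2 hb
    have hby' : (y : L) * q.σ y = algebraMap K L b ^ 2 := by
      rw [← hNval, ← hby, hjval]; simp
    have hb0 : algebraMap K L b ≠ 0 := by simp
    obtain ⟨z, hz, hyz⟩ := q.H1 S h2 hP hu (y * (j b)⁻¹) (mul_mem hy (inv_mem hb')) (by
      push_cast
      rw [hjval, map_mul, map_inv₀, q.σK]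
      field_simp
      exact hby')
    obtain ⟨x, hx⟩ := hNex z
    have e : y = j (b * x⁻¹) * z ^ 2 := by
      ext
      rw [map_mul, map_inv, hx]
      push_cast
      rw [hNval, hjval]
      push_cast at hyz
      rw [hjval] at hyz
      have hσ0 : q.σ (z : L) ≠ 0 := by simp
      have hz0 : (z : L) ≠ 0 := z.ne_zero
      field_simp at hyz ⊢
      exact hyz
    rw [e]
    refine Subgroup.mul_mem_sup ⟨_, mul_mem hb (inv_mem ?_), rfl⟩ ⟨z, hz, rfl⟩
    exact (hjB x).1 (hx ▸ hNmem z hz)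
  · rintro ⟨b, _, hb⟩
    exact hns ⟨b, by rw [← hb]; simp [sq]⟩
  · have hr0 : q.r ≠ 0 := by
      intro h
      have := q.hr
      rw [h, zero_pow two_ne_zero, eq_comm, map_eq_zero] at this
      exact u.ne_zero this
    refine ⟨Units.mk0 q.r hr0, ?_, ?_⟩
    · intro w hw
      have h1 : w.valuation L (q.r ^ 2) = 1 := by
        rw [q.hr, pb_eq_one_iff]; exact hu _ (by rwa [mem_SL] at hw)
      rw [map_pow] at h1
      exact (pow_eq_one_iff_of_nonneg zero_le two_ne_zero).1 h1
    · ext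
      simp [hjval, q.hr]

end FourSq

namespace FourSq
open IsDedekindDomain NumberField

section count
open Filter Topology
variable {X Y : Type*}

/-- norm of a multiset -/
def nm (N : X → ℕ) (m : Multiset X) : ℕ := (m.map N).prod

/-- multisets avoiding `S` of bounded norm -/
def cs (N : X → ℕ) (S : Finset X) (x : ℝ) : Set (Multiset X) := {m | (∀ p ∈ m, p ∉ S) ∧ (nm N m : ℝ) ≤ x}

lemma cs_sub (N : X → ℕ) (S : Finset X) (x : ℝ) : cs N S x ⊆ cs N ∅ x := fun _ hm => ⟨by simp, hm.2⟩

lemma nm_pos {N : X → ℕ} (hN : ∀ p, 2 ≤ N p) (m : Multiset X) : 0 < nm N m := by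
  apply Nat.pos_of_ne_zero
  unfold nm
  refine Multiset.prod_ne_zero ?_
  simp only [Multiset.mem_map, not_exists, not_and]
  intro p _ 
  have := hN p
  omega

lemma cs_step [DecidableEq X] {N : X → ℕ} (hN : ∀ p, 2 ≤ N p) (hf : ∀ x, (cs N ∅ x).Finite) (S : Finset X)
    (v : X) (hv : v ∉ S) (x : ℝ) :
    (cs N S x).ncard = (cs N (insert v S) x).ncard + (cs N S (x / N v)).ncard := by
  have hpos : (0:ℝ) < N v := by have := hN v; positivity
  have h1 : cs N S x = cs N (insert v S) x ∪ (fun m => v ::ₘ m) '' cs N S (x / N v) := by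
    ext m
    constructor
    · rintro ⟨h1, h2⟩
      by_cases hm : v ∈ m
      · right
        obtain ⟨n, rfl⟩ := Multiset.exists_cons_of_mem hm
        refine ⟨n, ⟨fun p hp => h1 p (Multiset.mem_cons_of_mem hp), ?_⟩, rfl⟩
        simp only [nm, Multiset.map_cons, Multiset.prod_cons] at h2 ⊢
        rw [le_div_iff₀ hpos]
        push_cast at h2
        push_cast
        linarith
      · left
        refine ⟨fun p hp => ?_, h2⟩
        rw [Finset.mem_insert, not_or]
        exact ⟨fun h => hm (h ▸ hp), h1 p hp⟩
    · rintro (⟨h1, h2⟩ | ⟨n, ⟨h1, h2⟩, rfl⟩)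
      · exact ⟨fun p hp h => h1 p hp (Finset.mem_insert_of_mem h), h2⟩
      · refine ⟨fun p hp => ?_, ?_⟩
        · rcases Multiset.mem_cons.1 hp with rfl | h
          · exact hv
          · exact h1 p h
        · simp only [nm, Multiset.map_cons, Multiset.prod_cons] at h2 ⊢
          rw [le_div_iff₀ hpos] at h2
          push_cast at h2 ⊢
          linarith
  conv_lhs => rw [h1]
  rw [Set.ncard_union_eq ?_ ((hf _).subset (cs_sub _ _ _)) (((hf _).subset (cs_sub _ _ _)).image _),
    Set.ncard_image_of_injective _ (fun a b hab => (Multiset.cons_inj_right v).1 hab)]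
  rw [Set.disjoint_left]
  rintro _ ⟨h1, _⟩ ⟨n, _, rfl⟩
  exact h1 v (by simp) (by simp)

lemma cs_tendsto {N : X → ℕ} (hN : ∀ p, 2 ≤ N p) (hf : ∀ x, (cs N ∅ x).Finite) (κ : ℝ) (hκ : 0 < κ)
    (h : Tendsto (fun x : ℝ => ((cs N ∅ x).ncard : ℝ) / x) atTop (𝓝 κ)) (S : Finset X) :
    ∃ κ' > 0, Tendsto (fun x : ℝ => ((cs N S x).ncard : ℝ) / x) atTop (𝓝 κ') := by
  classical
  induction S using Finset.induction_on with
  | empty => exact ⟨κ, hκ, h⟩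
  | insert v S hv ih =>
    obtain ⟨κ', hκ', ih⟩ := ih
    have h2 : (2:ℝ) ≤ N v := by exact_mod_cast hN v
    refine ⟨κ' - κ' / N v, ?_, ?_⟩
    · rw [gt_iff_lt, sub_pos, div_lt_iff₀ (by linarith)]
      nlinarith
    · have h3 : Tendsto (fun x : ℝ => x / N v) atTop atTop := tendsto_id.atTop_div_const (by linarith)
      have h4 := (ih.comp h3).div_const (N v : ℝ)
      refine (ih.sub h4).congr' ?_
      filter_upwards [eventually_gt_atTop 0] with x hx
      simp only [Function.comp]
      rw [cs_step hN hf S v hv x]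
      push_cast
      field_simp
      ring

lemma inj_pair (S : Finset X) (Φ Φ' : X → Y) (h1 : ∀ p ∉ S, ∀ q ∉ S, Φ p = Φ q → p = q)
    (h2 : ∀ p ∉ S, ∀ q ∉ S, Φ' p = Φ' q → p = q) (h3 : ∀ p ∉ S, ∀ q ∉ S, Φ p ≠ Φ' q)
    (m m' n n' : Multiset X) (hm : ∀ p ∈ m, p ∉ S) (hm' : ∀ p ∈ m', p ∉ S)
    (hn : ∀ p ∈ n, p ∉ S) (hn' : ∀ p ∈ n', p ∉ S)
    (h : m.map Φ + m'.map Φ' = n.map Φ + n'.map Φ') : m = n ∧ m' = n' := by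
  classical
  have key : ∀ m m' : Multiset X, (∀ p ∈ m, p ∉ S) → (∀ p ∈ m', p ∉ S) →
      (m.map Φ + m'.map Φ').filter (fun y => ∃ p ∉ S, Φ p = y) = m.map Φ := by
    intro m m' hm hm'
    rw [Multiset.filter_add, Multiset.filter_eq_self.2, Multiset.filter_eq_nil.2, add_zero]
    · intro y hy ⟨p, hp, e⟩
      obtain ⟨q, hq, rfl⟩ := Multiset.mem_map.1 hy
      exact h3 p hp q (hm' q hq) e
    · intro y hy
      obtain ⟨q, hq, rfl⟩ := Multiset.mem_map.1 hy
      exact ⟨q, hm q hq, rfl⟩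
  have inj : ∀ Ψ : X → Y, (∀ p ∉ S, ∀ q ∉ S, Ψ p = Ψ q → p = q) → ∀ m n : Multiset X,
      (∀ p ∈ m, p ∉ S) → (∀ p ∈ n, p ∉ S) → m.map Ψ = n.map Ψ → m = n := by
    intro Ψ hΨ m n hm hn e
    rcases isEmpty_or_nonempty X with hX | hX
    · exact Subsingleton.elim _ _
    have hg : ∀ m : Multiset X, (∀ p ∈ m, p ∉ S) → (m.map Ψ).map (Function.invFunOn Ψ {p | p ∉ S}) = m := by
      intro m hm
      rw [Multiset.map_map]
      conv_rhs => rw [← Multiset.map_id m]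
      refine Multiset.map_congr rfl fun p hp => ?_
      have hex : ∃ a ∈ {p | p ∉ S}, Ψ a = Ψ p := ⟨p, hm p hp, rfl⟩
      exact hΨ _ (Function.invFunOn_mem hex) _ (hm p hp) (Function.invFunOn_eq hex)
    rw [← hg m hm, e, hg n hn]
  have e1 : m.map Φ = n.map Φ := by rw [← key m m' hm hm', h, key n n' hn hn']
  have e2 : m'.map Φ' = n'.map Φ' := by rw [e1] at h; exact add_left_cancel h
  exact ⟨inj Φ h1 m n hm hn e1, inj Φ' h2 m' n' hm' hn' e2⟩

lemma nm_map_le {N : X → ℕ} {N' : Y → ℕ} (S : Finset X) (Φ : X → Y) (h : ∀ p ∉ S, N' (Φ p) ≤ N p)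
    (m : Multiset X) (hm : ∀ p ∈ m, p ∉ S) : nm N' (m.map Φ) ≤ nm N m := by
  unfold nm
  rw [Multiset.map_map]
  exact Multiset.prod_map_le_prod_map₀ _ _ (fun _ _ => Nat.zero_le _) (fun p hp => h p (hm p hp))

theorem count_false {N : X → ℕ} {N' : Y → ℕ} (hN : ∀ p, 2 ≤ N p) 
    (hf : ∀ x, (cs N ∅ x).Finite) (hf' : ∀ x, (cs N' ∅ x).Finite) (κ : ℝ) (hκ : 0 < κ)
    (h : Tendsto (fun x : ℝ => ((cs N ∅ x).ncard : ℝ) / x) atTop (𝓝 κ)) (κ' : ℝ)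
    (h' : Tendsto (fun x : ℝ => ((cs N' ∅ x).ncard : ℝ) / x) atTop (𝓝 κ'))
    (S : Finset X) (Φ Φ' : X → Y) (h1 : ∀ p ∉ S, ∀ q ∉ S, Φ p = Φ q → p = q)
    (h2 : ∀ p ∉ S, ∀ q ∉ S, Φ' p = Φ' q → p = q) (h3 : ∀ p ∉ S, ∀ q ∉ S, Φ p ≠ Φ' q)
    (h4 : ∀ p ∉ S, N' (Φ p) ≤ N p) (h5 : ∀ p ∉ S, N' (Φ' p) ≤ N p) : False := by
  classical
  obtain ⟨κS, hκS, hS⟩ := cs_tendsto hN hf κ hκ h S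
  set δ := κS / 2 with hδ
  have hδ0 : 0 < δ := by positivity
  have hlow : ∀ᶠ x : ℝ in atTop, δ * x ≤ ((cs N S x).ncard : ℝ) := by
    filter_upwards [hS.eventually (lt_mem_nhds (show δ < κS by rw [hδ]; linarith)), eventually_gt_atTop 0] with x hx hx0
    rw [lt_div_iff₀ hx0] at hx
    exact hx.le
  have hup : ∀ᶠ x : ℝ in atTop, ((cs N' ∅ x).ncard : ℝ) ≤ (κ' + 1) * x := by
    filter_upwards [h'.eventually (gt_mem_nhds (show κ' < κ' + 1 by linarith)), eventually_gt_atTop 0] with x hx hx0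
    rw [div_lt_iff₀ hx0] at hx
    exact hx.le
  have hnm : ∀ m, (0:ℝ) < nm N m := fun m => by exact_mod_cast nm_pos hN m
  -- main inequality
  have hineq : ∀ (F : Finset (Multiset X)), (∀ m ∈ F, ∀ p ∈ m, p ∉ S) → ∀ x : ℝ,
      ∑ m ∈ F, (cs N S (x / nm N m)).ncard ≤ (cs N' ∅ x).ncard := by
    intro F hF x
    have hfS : ∀ x, (cs N S x).Finite := fun x => (hf x).subset (cs_sub _ _ _)
    have e1 : ∑ m ∈ F, (cs N S (x / nm N m)).ncard = (F.sigma fun m => (hfS (x / nm N m)).toFinset).card := by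
      rw [Finset.card_sigma]
      exact Finset.sum_congr rfl fun m _ => Set.ncard_eq_toFinset_card _ _
    rw [e1, Set.ncard_eq_toFinset_card _ (hf' x)]
    apply Finset.card_le_card_of_injOn (fun a => a.1.map Φ + a.2.map Φ')
    · rintro ⟨m, m'⟩ ha
      simp only [Finset.coe_sigma, Set.mem_sigma_iff, Finset.mem_coe, Set.Finite.mem_toFinset] at ha ⊢
      obtain ⟨ha1, ha2, ha3⟩ := ha
      refine ⟨by simp, ?_⟩
      rw [le_div_iff₀ (hnm m)] at ha3
      have e2 : nm N' (m.map Φ + m'.map Φ') ≤ nm N m' * nm N m := by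
        have : nm N' (m.map Φ + m'.map Φ') = nm N' (m.map Φ) * nm N' (m'.map Φ') := by
          unfold nm; rw [Multiset.map_add, Multiset.prod_add]
        rw [this, mul_comm]
        exact Nat.mul_le_mul (nm_map_le S Φ' h5 m' ha2) (nm_map_le S Φ h4 m (hF m ha1))
      calc (nm N' (m.map Φ + m'.map Φ') : ℝ) ≤ ((nm N m' * nm N m : ℕ) : ℝ) := by exact_mod_cast e2
        _ ≤ x := by push_cast; exact ha3
    · rintro ⟨m, m'⟩ ha ⟨n, n'⟩ hb hab
      simp only [Finset.coe_sigma, Set.mem_sigma_iff, Finset.mem_coe, Set.Finite.mem_toFinset] at ha hb hab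
      obtain ⟨rfl, rfl⟩ := inj_pair S Φ Φ' h1 h2 h3 m m' n n' (hF m ha.1) ha.2.1 (hF n hb.1) hb.2.1 hab
      rfl
  have hbound : ∀ (F : Finset (Multiset X)), (∀ m ∈ F, ∀ p ∈ m, p ∉ S) →
      ∑ m ∈ F, (1 / (nm N m : ℝ)) ≤ (κ' + 1) / δ := by
    intro F hF
    have ev : ∀ᶠ x : ℝ in atTop, ∀ m ∈ F, δ * (x / nm N m) ≤ ((cs N S (x / nm N m)).ncard : ℝ) := by
      rw [Filter.eventually_all_finset]
      intro m _
      have h3 : Tendsto (fun x : ℝ => x / nm N m) atTop atTop := tendsto_id.atTop_div_const (hnm m)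
      exact h3.eventually hlow
    obtain ⟨x, hx1, hx2, hx0⟩ := (ev.and (hup.and (eventually_gt_atTop 0))).exists
    rw [le_div_iff₀ hδ0, Finset.sum_mul]
    have e3 : ∑ m ∈ F, δ * (x / nm N m) ≤ (κ' + 1) * x :=
      calc _ ≤ ∑ m ∈ F, ((cs N S (x / nm N m)).ncard : ℝ) := Finset.sum_le_sum hx1
        _ ≤ ((cs N' ∅ x).ncard : ℝ) := by exact_mod_cast hineq F hF x
        _ ≤ _ := hx2
    have e4 : ∑ m ∈ F, δ * (x / nm N m) = (∑ m ∈ F, 1 / (nm N m : ℝ) * δ) * x := by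
      rw [Finset.sum_mul]
      exact Finset.sum_congr rfl fun m _ => by ring
    rw [e4] at e3
    exact le_of_mul_le_mul_right e3 hx0
  set g : Multiset X → ℝ := fun m => if (∀ p ∈ m, p ∉ S) then 1 / (nm N m : ℝ) else 0 with hg
  have hsum : Summable g := by
    apply summable_of_sum_le (c := (κ' + 1) / δ)
    · intro m
      simp only [hg]
      split_ifs
      · have := hnm m
        positivity
      · exact le_rfl
    · intro F
      simp only [hg]
      rw [← Finset.sum_filter]
      exact hbound _ (fun m hm => (Finset.mem_filter.1 hm).2)
  obtain ⟨s, hs⟩ := summable_iff_vanishing_norm.1 hsum (δ / 2) (by positivity)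
  obtain ⟨x, hx1, hx2, hx0⟩ := (hlow.and ((eventually_ge_atTop (2 * s.card / δ)).and (eventually_gt_atTop 0))).exists
  have hfx : (cs N S x).Finite := (hf x).subset (cs_sub _ _ _)
  have h6 := hs (hfx.toFinset \ s) Finset.sdiff_disjoint
  have h7 : ((hfx.toFinset \ s).card : ℝ) * (1 / x) ≤ ∑ m ∈ hfx.toFinset \ s, g m := by
    rw [← nsmul_eq_mul]
    apply Finset.card_nsmul_le_sum
    intro m hm
    rw [Finset.mem_sdiff, Set.Finite.mem_toFinset] at hm
    obtain ⟨⟨hm1, hm2⟩, _⟩ := hm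
    simp only [hg, if_pos hm1]
    exact one_div_le_one_div_of_le (hnm m) hm2
  have h8 : ((cs N S x).ncard : ℝ) - s.card ≤ (hfx.toFinset \ s).card := by
    rw [Set.ncard_eq_toFinset_card _ hfx]
    have := Finset.le_card_sdiff s hfx.toFinset
    have h9 : hfx.toFinset.card ≤ (hfx.toFinset \ s).card + s.card := by omega
    have h10 : (hfx.toFinset.card : ℝ) ≤ (hfx.toFinset \ s).card + s.card := by exact_mod_cast h9
    linarith
  have h11 := (Real.le_norm_self _).trans_lt h6
  have h12 := h7.trans_lt h11
  rw [mul_one_div, div_lt_iff₀ hx0] at h12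
  rw [div_le_iff₀ hδ0] at hx2
  nlinarith

end count
end FourSq

namespace FourSq
open IsDedekindDomain NumberField

section Z
open Filter Topology

/-- norm of a prime -/
noncomputable def nP (K : Type*) [Field K] [NumberField K] (v : HeightOneSpectrum (𝓞 K)) : ℕ := Ideal.absNorm v.asIdeal

lemma nP_two {K : Type*} [Field K] [NumberField K] (v : HeightOneSpectrum (𝓞 K)) : 2 ≤ nP K v := by
  have h0 : Ideal.absNorm v.asIdeal ≠ 0 := by rw [Ne, Ideal.absNorm_eq_zero_iff]; exact v.ne_bot
  have h1 : Ideal.absNorm v.asIdeal ≠ 1 := by rw [Ne, Ideal.absNorm_eq_one_iff]; exact v.isPrime.ne_top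
  unfold nP; omega

/-- product ideal -/
noncomputable def pI {K : Type*} [Field K] [NumberField K] (m : Multiset (HeightOneSpectrum (𝓞 K))) : Ideal (𝓞 K) :=
  (m.map HeightOneSpectrum.asIdeal).prod

lemma pI_norm {K : Type*} [Field K] [NumberField K] (m : Multiset (HeightOneSpectrum (𝓞 K))) :
    Ideal.absNorm (pI m) = nm (nP K) m := by
  unfold pI nm
  rw [map_multiset_prod, Multiset.map_map]
  rfl

lemma pI_inj {K : Type*} [Field K] [NumberField K] : Function.Injective (pI (K := K)) := by
  intro m n h
  have key : ∀ m : Multiset (HeightOneSpectrum (𝓞 K)), UniqueFactorizationMonoid.normalizedFactors (pI m) =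
      m.map HeightOneSpectrum.asIdeal := by
    intro m
    unfold pI
    apply UniqueFactorizationMonoid.normalizedFactors_prod_of_prime
    intro p hp
    obtain ⟨v, _, rfl⟩ := Multiset.mem_map.1 hp
    exact v.prime
  have h2 := key m
  rw [h, key n] at h2
  exact (Multiset.map_injective (fun a b hab => HeightOneSpectrum.ext hab) h2).symm

lemma pI_surj {K : Type*} [Field K] [NumberField K] (I : Ideal (𝓞 K)) (hI : I ≠ ⊥) : ∃ m, pI (K := K) m = I := by
  have hp : ∀ J ∈ UniqueFactorizationMonoid.normalizedFactors I, ∃ v : HeightOneSpectrum (𝓞 K), v.asIdeal = J := by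
    intro J hJ
    have := UniqueFactorizationMonoid.prime_of_normalized_factor J hJ
    exact ⟨⟨J, Ideal.isPrime_of_prime this, this.ne_zero⟩, rfl⟩
  choose f hf using hp
  refine ⟨(UniqueFactorizationMonoid.normalizedFactors I).attach.map (fun J => f J.1 J.2), ?_⟩
  unfold pI
  rw [Multiset.map_map]
  simp only [Function.comp_def, hf, Multiset.attach_map_val]
  exact associated_iff_eq.1 (UniqueFactorizationMonoid.prod_normalizedFactors hI)

lemma nP_fin (K : Type*) [Field K] [NumberField K] (x : ℝ) : (cs (nP K) ∅ x).Finite := by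
  have h := Ideal.finite_setOfPred_absNorm_le (S := 𝓞 K) ⌊x⌋₊
  refine Set.Finite.of_finite_image (f := pI) (h.subset ?_) pI_inj.injOn
  rintro _ ⟨m, hm, rfl⟩
  change Ideal.absNorm (pI m) ≤ _
  rw [pI_norm]
  exact Nat.le_floor hm.2

lemma nP_card (K : Type*) [Field K] [NumberField K] (x : ℝ) : (cs (nP K) ∅ x).ncard =
    Nat.card {I : nonZeroDivisors (Ideal (𝓞 K)) // (Ideal.absNorm (I : Ideal (𝓞 K)) : ℝ) ≤ x} := by
  rw [← Nat.card_coe_set_eq]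
  have hne : ∀ m, pI (K := K) m ∈ nonZeroDivisors (Ideal (𝓞 K)) := by
    intro m
    rw [mem_nonZeroDivisors_iff_ne_zero, Ne, Ideal.zero_eq_bot, ← Ideal.absNorm_eq_zero_iff, pI_norm]
    exact (nm_pos nP_two m).ne'
  refine Nat.card_congr (Equiv.ofBijective (fun m => ⟨⟨pI m.1, hne m.1⟩, ?_⟩) ⟨?_, ?_⟩)
  · change (Ideal.absNorm (pI m.1) : ℝ) ≤ x
    rw [pI_norm]; exact m.2.2
  · rintro ⟨m, hm⟩ ⟨n, hn⟩ h
    simp only [Subtype.mk.injEq] at h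
    exact Subtype.ext (pI_inj h)
  · rintro ⟨⟨I, hI⟩, hx⟩
    obtain ⟨m, rfl⟩ := pI_surj I (mem_nonZeroDivisors_iff_ne_zero.1 hI)
    refine ⟨⟨m, by simp, ?_⟩, rfl⟩
    change (Ideal.absNorm (pI m) : ℝ) ≤ x at hx
    rwa [pI_norm] at hx

lemma nP_tendsto (K : Type*) [Field K] [NumberField K] :
    ∃ κ > 0, Tendsto (fun x : ℝ => ((cs (nP K) ∅ x).ncard : ℝ) / x) atTop (𝓝 κ) := by
  refine ⟨_, NumberField.dedekindZeta_residue_pos K, ?_⟩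
  simp_rw [nP_card]
  exact NumberField.Ideal.tendsto_norm_le_div_atTop₀ K

variable {K : Type*} [Field K] [NumberField K] {L : Type*} [Field L] [NumberField L] [Algebra K L]

lemma QE.pb_pb {u : K} (q : QE K L u) (w : HeightOneSpectrum (𝓞 L)) : pb q.σ (pb q.σ w) = w := by
  apply pb_unique
  intro x
  rw [← pb_lt_one_iff, q.σσ]

lemma mem_pb (w : HeightOneSpectrum (𝓞 L)) (a : 𝓞 K) :
    algebraMap (𝓞 K) (𝓞 L) a ∈ w.asIdeal ↔ a ∈ (pb (algebraMap K L) w).asIdeal := by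
  rw [← vlt_iff, ← vlt_iff, ← pb_lt_one_iff (algebraMap K L)]
  rfl

lemma QE.norm_le {u : K} (q : QE K L u) (w : HeightOneSpectrum (𝓞 L)) (h : pb q.σ w ≠ w) :
    nP L w ≤ nP K (pb (algebraMap K L) w) := by
  set v := pb (algebraMap K L) w with hv
  set w' := pb q.σ w with hw'
  have hv' : pb (algebraMap K L) w' = v := q.pb_σ w
  have lo : w'.asIdeal.LiesOver v.asIdeal := ⟨by
    ext a
    rw [Ideal.mem_comap, mem_pb, hv']⟩
  have h1 : nP K v ≤ nP L w' := by
    unfold nP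
    have := v.isMaximal
    have := w'.isMaximal
    rw [Ideal.absNorm_eq_pow_inertiaDeg'_of_liesOver w'.asIdeal v.asIdeal]
    · exact Nat.le_self_pow (Ideal.inertiaDeg'_ne_zero _ _) _
    · exact v.isPrime
    · exact v.ne_bot
  have h2 : w.asIdeal * w'.asIdeal ∣ v.asIdeal.map (algebraMap (𝓞 K) (𝓞 L)) := by
    rw [Ideal.dvd_iff_le, Ideal.mul_eq_inf_of_coprime]
    · rw [le_inf_iff, Ideal.map_le_iff_le_comap, Ideal.map_le_iff_le_comap]
      exact ⟨fun a ha => (mem_pb w a).2 ha, fun a ha => (mem_pb w' a).2 (hv' ▸ ha)⟩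
    · exact Ideal.IsMaximal.coprime_of_ne w.isMaximal w'.isMaximal (fun e => h (HeightOneSpectrum.ext e.symm))
  have h3 : nP L w * nP L w' ≤ nP K v ^ 2 := by
    have h4 := map_dvd Ideal.absNorm h2
    rw [map_mul, Ideal.absNorm_algebraMap, ← IsFractionRing.finrank_eq (𝓞 K) K (𝓞 L) L, q.fr] at h4
    apply Nat.le_of_dvd _ h4
    have := nP_two v
    unfold nP at this
    positivity
  have := nP_two v
  have h5 : nP L w * nP K v ≤ nP K v * nP K v := by
    rw [← sq]
    exact (Nat.mul_le_mul_left _ h1).trans h3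
  exact Nat.le_of_mul_le_mul_right h5 (by omega)

theorem lemmaZ {K : Type*} [Field K] [NumberField K] (S : Finset (HeightOneSpectrum (𝓞 K))) (c : Kˣ)
    (hc : ¬ IsSquare (c : K)) : ∃ v ∉ S, c ∉ LS v := by
  by_contra! hcon
  obtain ⟨L, _, _, _, ⟨q⟩⟩ := exists_QE hc
  obtain ⟨κ, hκ, hK⟩ := nP_tendsto K
  obtain ⟨κ', hκ', hL⟩ := nP_tendsto L
  choose Φ hΦ using pb_surj (algebraMap K L)
  have hΦ' : ∀ v, pb (algebraMap K L) (pb q.σ (Φ v)) = v := fun v => (q.pb_σ _).trans (hΦ v)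
  have hne : ∀ v ∉ S, pb q.σ (Φ v) ≠ Φ v := fun v hv => q.pb_σ_ne _ (by rw [hΦ]; exact hcon v hv)
  refine count_false nP_two (nP_fin K) (nP_fin L) κ hκ hK κ' hL S Φ (fun v => pb q.σ (Φ v)) ?_ ?_ ?_ ?_ ?_
  · intro v _ v' _ h
    rw [← hΦ v, h, hΦ]
  · intro v _ v' _ h
    rw [← hΦ' v]
    rw [h, hΦ']
  · intro v hv v' hv' h
    have : v = v' := by rw [← hΦ v, h, hΦ']
    subst this
    exact hne v hv h.symm
  · intro v hv
    have := q.norm_le _ (hne v hv)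
    rwa [hΦ] at this
  · intro v hv
    have := q.norm_le (pb q.σ (Φ v)) (by rw [q.pb_pb]; exact (hne v hv).symm)
    rwa [hΦ'] at this

end Z
end FourSq

namespace FourSq
open IsDedekindDomain NumberField

section lem2
variable {K : Type*} [Field K] [NumberField K]

lemma fin_ne_one {x : K} (hx : x ≠ 0) : {v : HeightOneSpectrum (𝓞 K) | v.valuation K x ≠ 1}.Finite := by
  obtain ⟨a, b, hb, rfl⟩ := exists_frac x
  have hb' : algebraMap (𝓞 K) K b ≠ 0 := by simpa using hb
  have ha : a ≠ 0 := by rintro rfl; simp at hx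
  have fa := Ideal.finite_factors (I := Ideal.span {a}) (by simpa using ha)
  have fb := Ideal.finite_factors (I := Ideal.span {b}) (by simpa using hb)
  refine (fa.union fb).subset ?_
  intro v hv
  by_contra hcon
  rw [Set.mem_union, not_or, Set.mem_ofPred_eq, Set.mem_ofPred_eq, Ideal.dvd_span_singleton, Ideal.dvd_span_singleton,
    ← veq_iff, ← veq_iff] at hcon
  apply hv
  rw [map_div₀, hcon.1, hcon.2, div_one]

lemma sq_val {v : HeightOneSpectrum (𝓞 K)} {y : K} (h : v.valuation K (y ^ 2) = 1) : v.valuation K y = 1 := by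
  rw [map_pow] at h
  exact (pow_eq_one_iff_of_nonneg zero_le two_ne_zero).1 h

lemma mem_sqU {S : Finset (HeightOneSpectrum (𝓞 K))} {x : Kˣ} (hx : x ∈ US S) (h : IsSquare (x : K)) : x ∈ sqU S := by
  obtain ⟨y, hy⟩ := h
  have hy0 : y ≠ 0 := by rintro rfl; exact x.ne_zero (by simpa using hy)
  refine ⟨Units.mk0 y hy0, ?_, ?_⟩
  · intro v hv
    apply sq_val
    rw [Units.val_mk0, sq, ← hy]
    exact hx v hv
  · ext
    simp [hy, sq]

lemma LS_map {L : Type*} [Field L] [NumberField L] (f : K →+* L) (w : HeightOneSpectrum (𝓞 L)) (x : Kˣ)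
    (hx : x ∈ LS (pb f w)) : Units.map (f : K →* L) x ∈ LS w := by
  obtain ⟨y, hy⟩ := hx
  refine ⟨Units.map (f : K →* L) y, ?_⟩
  rw [← pb_lt_iff f] at hy
  simpa [map_ofNat] using hy

theorem lemmaZ' (S : Finset (HeightOneSpectrum (𝓞 K))) (b u : Kˣ)
    (hb : ¬ IsSquare (b : K)) (hu : ¬ IsSquare (u : K)) (hub : ¬ IsSquare (u * b : K)) :
    ∃ v ∉ S, v.valuation K (2:K) = 1 ∧ v.valuation K (u:K) = 1 ∧ v.valuation K (b:K) = 1 ∧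
      b ∈ LS v ∧ u ∉ LS v := by
  classical
  obtain ⟨L, _, _, _, ⟨q⟩⟩ := exists_QE hb
  set S' := S ∪ (fin_ne_one (K := K) (x := 2) (by norm_num)).toFinset ∪
    (fin_ne_one (K := K) u.ne_zero).toFinset ∪ (fin_ne_one (K := K) b.ne_zero).toFinset with hS'
  set uL : Lˣ := Units.map (algebraMap K L : K →* L) u with huL
  have huL' : (uL : L) = algebraMap K L u := rfl
  have hns : ¬ IsSquare (uL : L) := by
    rintro ⟨z, hz⟩
    obtain ⟨α, β, rfl⟩ := q.rep z
    have h1 : algebraMap K L (2 * α * β) * q.r = algebraMap K L (u - α ^ 2 - β ^ 2 * b) := by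
      simp only [map_mul, map_sub, map_pow, map_ofNat, ← q.hr, ← huL', hz]
      ring
    by_cases h0 : 2 * α * β = 0
    · rw [h0, map_zero, zero_mul, eq_comm, map_eq_zero] at h1
      have h0' : α = 0 ∨ β = 0 := by simpa using h0
      rcases h0' with rfl | rfl
      · exact hub ⟨β * b, by linear_combination (b : K) * h1⟩
      · exact hu ⟨α, by linear_combination h1⟩
    · have h0L : algebraMap K L (2 * α * β) ≠ 0 := by rw [Ne, map_eq_zero]; exact h0
      apply hb
      refine ⟨(u - α ^ 2 - β ^ 2 * b) / (2 * α * β), (algebraMap K L).injective ?_⟩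
      rw [← q.hr, ← sq, map_pow, map_div₀, ← h1, mul_div_assoc, mul_comm, div_mul_cancel₀ _ h0L]
  obtain ⟨w, hw, hwu⟩ := lemmaZ (SL (algebraMap K L) S') uL hns
  rw [mem_SL] at hw
  simp only [hS', Finset.mem_union, Set.Finite.mem_toFinset, not_or, Set.mem_ofPred_eq, not_not] at hw
  obtain ⟨⟨⟨hw1, hw2⟩, hw3⟩, hw4⟩ := hw
  have hu' : u ∉ LS (pb (algebraMap K L) w) := fun h => hwu (LS_map _ w u h)
  refine ⟨pb (algebraMap K L) w, hw1, hw2, hw3, hw4, ?_, hu'⟩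
  by_contra hb'
  have h5 := odd_units _ hw2 hw3 hw4 hu' hb'
  have h6 := LS_map _ w _ h5
  rw [map_mul] at h6
  have hr0 : q.r ≠ 0 := by
    intro h
    have := q.hr
    rw [h, zero_pow two_ne_zero, eq_comm, map_eq_zero] at this
    exact b.ne_zero this
  have h7 : Units.map (algebraMap K L : K →* L) b = (Units.mk0 q.r hr0) ^ 2 := by
    ext; simp [q.hr]
  rw [h7, Subgroup.mul_mem_cancel_right _ (sq_mem_LS w _)] at h6
  exact hwu h6

lemma relIndex_le_two {G : Type*} [CommGroup G] {H U : Subgroup G}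
    (h : ∀ x ∈ U, ∀ y ∈ U, x ∉ H → y ∉ H → x * y ∈ H) : H.relIndex U ≠ 0 ∧ H.relIndex U ≤ 2 := by
  by_cases hU : U ≤ H
  · rw [Subgroup.relIndex_eq_one.2 hU]; simp
  · obtain ⟨a, ha, haH⟩ := SetLike.not_le_iff_exists.1 hU
    have : H.relIndex U = 2 := by
      unfold Subgroup.relIndex
      rw [Subgroup.index_eq_two_iff]
      refine ⟨⟨a, ha⟩, fun b => ?_⟩
      simp only [Subgroup.mem_subgroupOf, Subgroup.coe_mul]
      by_cases hb : (b : G) ∈ H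
      · right
        exact ⟨hb, by rwa [Subgroup.mul_mem_cancel_left _ hb]⟩
      · left
        exact ⟨h b b.2 a ha hb haH, hb⟩
    rw [this]; simp

lemma relIndex_iInf_le {G ι : Type*} [CommGroup G] (T : Finset ι) (F : ι → Subgroup G) (U : Subgroup G)
    (h : ∀ i ∈ T, (F i).relIndex U ≠ 0 ∧ (F i).relIndex U ≤ 2) :
    (⨅ i ∈ T, F i).relIndex U ≠ 0 ∧ (⨅ i ∈ T, F i).relIndex U ≤ 2 ^ T.card := by
  classical
  induction T using Finset.induction_on with
  | empty => simp
  | insert a T ha ih =>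
    rw [Finset.iInf_insert]
    obtain ⟨h1, h2⟩ := h a (by simp)
    obtain ⟨h3, h4⟩ := ih (fun i hi => h i (by simp [hi]))
    refine ⟨Subgroup.relIndex_inf_ne_zero h1 h3, Subgroup.relIndex_inf_le.trans ?_⟩
    rw [Finset.card_insert_of_notMem ha, pow_succ, mul_comm]
    exact Nat.mul_le_mul h4 h2

theorem lemma2 (S : Finset (HeightOneSpectrum (𝓞 K))) (h2 : ∀ v ∉ S, v.valuation K (2:K) = 1)
    (b : Kˣ) (hb : b ∈ US S) (hbs : ¬ IsSquare (b : K)) (k : ℕ)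
    (hk : k + 1 ≤ S.card + Fintype.card (InfinitePlace K)) :
    ∃ T : Finset (HeightOneSpectrum (𝓞 K)), Disjoint S T ∧ T.card = k ∧ (∀ q ∈ T, b ∈ LS q) ∧
      ∀ η : HeightOneSpectrum (𝓞 K) → Prop, ∃ y ∈ US S, ∀ q ∈ T, (y ∈ LS q ↔ η q) := by
  classical
  induction k with
  | zero => exact ⟨∅, by simp, rfl, by simp, fun _ => ⟨1, one_mem _, by simp⟩⟩
  | succ k ih =>
    obtain ⟨T, hST, hT, hTb, hpat⟩ := ih (by omega)
    obtain ⟨u, hu, huT, hus, hubs⟩ : ∃ u ∈ US S, (∀ q ∈ T, u ∈ LS q) ∧ ¬ IsSquare (u : K) ∧ ¬ IsSquare (u * b : K) := by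
      by_contra! hcon
      set V := (⨅ q ∈ T, LS q) ⊓ US S with hV
      have hVmem : ∀ x, x ∈ V ↔ (∀ q ∈ T, x ∈ LS q) ∧ x ∈ US S := by
        intro x; simp [hV, Subgroup.mem_inf, Subgroup.mem_iInf]
      have i1 : V.relIndex (US S) ≤ 2 ^ k := by
        rw [hV, Subgroup.inf_relIndex_right, ← hT]
        refine (relIndex_iInf_le T _ _ fun q hq => relIndex_le_two ?_).2
        intro x hx y hy
        have hqS : q ∉ S := fun h => Finset.disjoint_left.1 hST h hq
        exact odd_units q (h2 q hqS) (hx q hqS) (hy q hqS)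
      have i2 : (sqU S).relIndex V ≤ 2 := by
        have key : ∀ x ∈ V, x ∉ sqU S → x * b ∈ sqU S := by
          intro x hx hx'
          rw [hVmem] at hx
          apply mem_sqU (mul_mem hx.2 hb)
          rw [Units.val_mul]
          exact hcon x hx.2 hx.1 (fun h => hx' (mem_sqU hx.2 h))
        refine (relIndex_le_two fun x hx y hy hx' hy' => ?_).2
        have h3 := mul_mem (key x hx hx') (key y hy hy')
        have h4 : b ^ 2 ∈ sqU S := ⟨b, hb, rfl⟩
        have e : x * b * (y * b) = x * y * b ^ 2 := by rw [sq, mul_mul_mul_comm]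
        rwa [e, Subgroup.mul_mem_cancel_right _ h4] at h3
      have i3 : sqU S ≤ V := by
        rintro x hx
        rw [hVmem]
        refine ⟨fun q _ => ?_, sqU_le S hx⟩
        obtain ⟨y, _, rfl⟩ := hx
        exact sq_mem_LS q y
      have i4 := Subgroup.relIndex_mul_relIndex _ _ _ i3 (inf_le_right : V ≤ US S)
      rw [sqU_relIndex] at i4
      have i5 : 2 ^ (S.card + Fintype.card (InfinitePlace K)) ≤ 2 ^ (k + 1) := by
        rw [← i4, pow_succ, mul_comm]
        exact Nat.mul_le_mul i1 i2
      have := (Nat.pow_le_pow_iff_right (by norm_num)).1 i5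
      omega
    obtain ⟨v, hvS, hv2, hvu, hvb, hvbL, hvuL⟩ := lemmaZ' (S ∪ T) b u hbs hus hubs
    rw [Finset.mem_union, not_or] at hvS
    refine ⟨insert v T, ?_, ?_, ?_, ?_⟩
    · rw [Finset.disjoint_insert_right]; exact ⟨hvS.1, hST⟩
    · rw [Finset.card_insert_of_notMem hvS.2, hT]
    · intro q hq
      rcases Finset.mem_insert.1 hq with rfl | hq
      · exact hvbL
      · exact hTb q hq
    · intro η
      obtain ⟨y, hy, hyη⟩ := hpat η
      by_cases h : (y ∈ LS v ↔ η v)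
      · refine ⟨y, hy, fun q hq => ?_⟩
        rcases Finset.mem_insert.1 hq with rfl | hq
        · exact h
        · exact hyη q hq
      · refine ⟨y * u, mul_mem hy hu, fun q hq => ?_⟩
        rcases Finset.mem_insert.1 hq with rfl | hq
        · rw [odd_units_iff q hv2 (hy q hvS.1) hvu]
          tauto
        · rw [Subgroup.mul_mem_cancel_right _ (huT q hq)]
          exact hyη q hq

lemma exists_pu (S : Finset (HeightOneSpectrum (𝓞 K))) (hP : PrS S) (q : HeightOneSpectrum (𝓞 K)) (hq : q ∉ S) :
    ∃ c : Kˣ, c ∉ EV q ∧ ∀ v ∉ S, v ≠ q → v.valuation K (c : K) = 1 := by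
  obtain ⟨c, hc⟩ := hP q.asIdeal q.ne_bot
  refine ⟨c, ?_, ?_⟩
  · obtain ⟨h1, i, hi, hic⟩ := hc q hq
    have hle : q.valuation K (c : K) ≤ WithZero.exp (-1 : ℤ) := by
      rw [← hic]
      have := (vpow_iff q i 1).2 (by simpa using hi)
      simpa using this
    obtain ⟨π, hπ⟩ := q.valuation_exists_uniformizer K
    obtain ⟨π', hπ'⟩ := q.intValuation_exists_uniformizer
    have hπ1 : q.valuation K (algebraMap (𝓞 K) K π') = WithZero.exp (-1 : ℤ) := by
      rw [HeightOneSpectrum.valuation_of_algebraMap, hπ']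
    have hge := h1 π' (by
      rw [← vlt_iff, hπ1]; decide)
    rw [hπ1] at hge
    rw [mem_EV_iff q c (-1) (le_antisymm hle hge)]
    decide
  · intro v hv hvq
    obtain ⟨h1, i, hi, hic⟩ := hc v hv
    apply le_antisymm
    · rw [← hic]; exact vle v i
    · have : ¬ q.asIdeal ≤ v.asIdeal := by
        intro h
        exact hvq (HeightOneSpectrum.ext (q.isMaximal.eq_of_le v.isPrime.ne_top h).symm)
      obtain ⟨j, hj, hj'⟩ := SetLike.not_le_iff_exists.1 this
      have := h1 j hj
      rwa [(veq_iff v j).2 hj'] at this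

lemma exists_W (S T : Finset (HeightOneSpectrum (𝓞 K))) [DecidableEq (HeightOneSpectrum (𝓞 K))] (hP : PrS S) (hST : Disjoint S T)
    (θ : HeightOneSpectrum (𝓞 K) → Prop) :
    ∃ W ∈ US (S ∪ T), ∀ q ∈ T, (W ∈ EV q ↔ θ q) ∧ (θ q → q.valuation K (W : K) = 1) := by
  classical
  choose! c hc1 hc2 using exists_pu S hP
  have hTS : ∀ q ∈ T, q ∉ S := fun q hq h => Finset.disjoint_left.1 hST h hq
  set W := ∏ q ∈ T.filter (fun q => ¬ θ q), c q with hW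
  have hWv : ∀ A : Finset (HeightOneSpectrum (𝓞 K)), A ⊆ T → ∀ v ∉ S, v ∉ A → v.valuation K ((∏ q ∈ A, c q : Kˣ) : K) = 1 := by
    intro A hA v hv hvA
    rw [Units.coe_prod, map_prod]
    apply Finset.prod_eq_one
    intro q hq
    exact hc2 q (hTS q (hA hq)) v hv (fun h => hvA (h ▸ hq))
  refine ⟨W, ?_, ?_⟩
  · intro v hv
    rw [Finset.mem_union, not_or] at hv
    exact hWv _ (Finset.filter_subset _ _) v hv.1 (fun h => hv.2 (Finset.filter_subset _ _ h))
  · intro q hq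
    have hunit : θ q → q.valuation K (W : K) = 1 := fun h =>
      hWv _ (Finset.filter_subset _ _) q (hTS q hq) (by simp [h])
    refine ⟨⟨fun h => ?_, fun h => unit_mem_EV q (hunit h)⟩, hunit⟩
    by_contra hθ
    have hqf : q ∈ T.filter (fun q => ¬ θ q) := by simp [hq, hθ]
    rw [hW, ← Finset.mul_prod_erase _ _ hqf, Subgroup.mul_mem_cancel_right] at h
    · exact hc1 q (hTS q hq) h
    · apply unit_mem_EV
      exact hWv _ ((Finset.erase_subset _ _).trans (Finset.filter_subset _ _)) q (hTS q hq) (by simp)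

theorem lemma3 [IsTotallyComplex K] [DecidableEq (HeightOneSpectrum (𝓞 K))]
    (S T : Finset (HeightOneSpectrum (𝓞 K))) (h2 : ∀ v ∉ S, v.valuation K (2:K) = 1)
    (hP : PrS S) (hST : Disjoint S T)
    (hpat : ∀ η : HeightOneSpectrum (𝓞 K) → Prop, ∃ y ∈ US S, ∀ q ∈ T, (y ∈ LS q ↔ η q))
    (u : Kˣ) (hu : u ∈ US (S ∪ T)) (huS : ∀ v ∈ S, u ∈ LS v) : IsSquare (u : K) := by
  classical
  by_contra hns
  have hTS : ∀ q ∈ T, q ∉ S := fun q hq h => Finset.disjoint_left.1 hST h hq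
  set Tp := T.filter (fun q => u ∈ LS q) with hTp
  set Tn := T.filter (fun q => u ∉ LS q) with hTn
  have hcard : Tp.card + Tn.card = T.card := by
    rw [hTp, hTn]; exact Finset.card_filter_add_card_filter_not _
  obtain ⟨l1, l2⟩ := lemma1 (S ∪ T) (S ∪ Tp) (fun v hv => h2 v (fun h => hv (Finset.mem_union_left _ h)))
    (hP.mono Finset.subset_union_left) u hu hns (Finset.union_subset_union_right (Finset.filter_subset _ _)) (by
      intro v hv
      rcases Finset.mem_union.1 hv with h | h
      · exact huS v h
      · exact (Finset.mem_filter.1 h).2)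
  rw [Finset.card_union_of_disjoint hST, Finset.card_union_of_disjoint
    (hST.mono_right (Finset.filter_subset _ _)), ← hcard] at l2
  have hp := pattern_relIndex Tn (fun q => if u ∈ EV q then EV q else FR q u) (US (S ∪ T)) (NV (u : K)) ?_ ?_ l1
  · have : 2 ^ Tn.card * 2 ^ (S.card + Tp.card + 1) ≤ 2 ^ (S.card + (Tp.card + Tn.card)) :=
      (Nat.mul_le_mul_right _ hp).trans l2
    rw [← pow_add] at this
    have := (Nat.pow_le_pow_iff_right (by norm_num)).1 this
    omega
  · intro q hq
    have hq' := Finset.mem_filter.1 hq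
    split_ifs with h
    · exact NV_le_EV_odd q (h2 q (hTS q hq'.1)) u h hq'.2
    · exact NV_le_FR q (h2 q (hTS q hq'.1)) u h
  · intro η
    obtain ⟨W, hW, hWT⟩ := exists_W S T hP hST (fun q => u ∈ EV q → η q)
    obtain ⟨y, hy, hyT⟩ := hpat (fun q => (W ∈ LS q ↔ η q))
    refine ⟨y * W, mul_mem (US_mono Finset.subset_union_left hy) hW, fun q hq => ?_⟩
    have hq' := (Finset.mem_filter.1 hq).1
    have hyq := hy q (hTS q hq')
    obtain ⟨w1, w2⟩ := hWT q hq'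
    split_ifs with h
    · rw [Subgroup.mul_mem_cancel_left _ (unit_mem_EV q hyq), w1]
      tauto
    · have hWq := w2 (fun h' => absurd h' h)
      rw [unit_mem_FR_iff q u _ h (by rw [Units.val_mul, map_mul, hyq, hWq, one_mul]),
        odd_units_iff q (h2 q (hTS q hq')) hyq hWq, hyT q hq']
      tauto

end lem2
end FourSq

namespace FourSq
open IsDedekindDomain NumberField
variable {K : Type*} [Field K] [NumberField K]

lemma crt (S : Finset (HeightOneSpectrum (𝓞 K))) (n : HeightOneSpectrum (𝓞 K) → ℕ)
    (a : HeightOneSpectrum (𝓞 K) → 𝓞 K) : ∃ y : 𝓞 K, ∀ v ∈ S, y - a v ∈ v.asIdeal ^ n v := by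
  obtain ⟨y, hy⟩ := IsDedekindDomain.exists_forall_sub_mem_ideal (s := S)
    (fun v : HeightOneSpectrum (𝓞 K) => v.asIdeal) n (fun v _ => v.prime)
    (fun v _ w _ h h' => h (HeightOneSpectrum.ext h')) (fun v => a v)
  exact ⟨y, hy⟩

lemma EV_pattern (S : Finset (HeightOneSpectrum (𝓞 K))) (η : HeightOneSpectrum (𝓞 K) → Prop) :
    ∃ x : Kˣ, ∀ v ∈ S, (x ∈ EV v ↔ η v) := by
  classical
  choose π hπ using fun v : HeightOneSpectrum (𝓞 K) => v.intValuation_exists_uniformizer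
  have hπ' : ∀ v : HeightOneSpectrum (𝓞 K), v.valuation K (algebraMap (𝓞 K) K (π v)) = WithZero.exp (-1 : ℤ) := by
    intro v; rw [v.valuation_of_algebraMap, hπ]
  obtain ⟨y, hy⟩ := crt S (fun _ => 2) (fun v => if η v then 1 else π v)
  have key : ∀ v ∈ S, v.valuation K (algebraMap (𝓞 K) K y) = WithZero.exp (if η v then 0 else (-1 : ℤ)) := by
    intro v hv
    have h1 := (vpow_iff v _ 2).2 (hy v hv)
    rw [map_sub] at h1
    have e : algebraMap (𝓞 K) K y = algebraMap (𝓞 K) K (if η v then 1 else π v) +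
      (algebraMap (𝓞 K) K y - algebraMap (𝓞 K) K (if η v then 1 else π v)) := by ring
    have h3 : v.valuation K (algebraMap (𝓞 K) K (if η v then 1 else π v)) = WithZero.exp (if η v then 0 else (-1 : ℤ)) := by
      split_ifs
      · simp
      · exact hπ' v
    rw [e, Valuation.map_add_eq_of_lt_left, h3]
    rw [h3]
    refine h1.trans_lt ?_
    rw [WithZero.exp_lt_exp]
    split_ifs <;> norm_num
  by_cases hS : S.Nonempty
  · obtain ⟨v0, hv0⟩ := hS
    have hy0 : algebraMap (𝓞 K) K y ≠ 0 := by
      intro h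
      have := key v0 hv0
      rw [h, map_zero] at this
      exact WithZero.exp_ne_zero this.symm
    refine ⟨Units.mk0 _ hy0, fun v hv => ?_⟩
    rw [mem_EV_iff v _ _ (key v hv)]
    split_ifs with h
    · simp [h]
    · simp [h]
  · rw [Finset.not_nonempty_iff_eq_empty] at hS
    subst hS
    exact ⟨1, by simp⟩

lemma grp {G : Type*} [CommGroup G] (Sg E U N : Subgroup G) (ns : ℕ) (h1 : Sg ≤ E)
    (h0 : Sg.index ≠ 0) (h2 : Sg.index ≤ 2 * Sg.relIndex U) (h3 : 2 ^ ns ≤ E.index)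
    (hN : N ≤ E) (h4 : N.relIndex U ≠ 0) (h5 : N.relIndex U * 2 ≤ 2 ^ ns) : E ⊓ U ≤ N := by
  have a1 := Subgroup.relIndex_mul_index (le_sup_left : Sg ≤ Sg ⊔ U)
  rw [Subgroup.relIndex_sup_left] at a1
  have a2 := Subgroup.relIndex_mul_index (le_sup_left : E ≤ E ⊔ U)
  rw [Subgroup.relIndex_sup_left] at a2
  have a3 := Subgroup.index_dvd_of_le (sup_le_sup_right h1 U)
  have a4 : (Sg ⊔ U).index ≤ 2 := by
    have : Sg.relIndex U ≠ 0 := by intro h; rw [h] at a1; simp at a1; exact h0 a1.symm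
    have hp := Nat.pos_of_ne_zero this
    by_contra hc
    push Not at hc
    nlinarith
  have a5 : (Sg ⊔ U).index ≠ 0 := by intro h; rw [h] at a1; simp at a1; exact h0 a1.symm
  have a6 : (E ⊔ U).index ≤ 2 := (Nat.le_of_dvd (Nat.pos_of_ne_zero a5) a3).trans a4
  have a7 := Subgroup.relIndex_inf_mul_relIndex N E U
  rw [inf_eq_left.2 hN] at a7
  rw [← Subgroup.relIndex_eq_one]
  have a8 : N.relIndex (E ⊓ U) ≠ 0 := by intro h; rw [h] at a7; simp at a7; exact h4 a7.symm
  have a9 : E.relIndex U ≠ 0 := by intro h; rw [h] at a7; simp at a7; exact h4 a7.symm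
  have a10 := Nat.pos_of_ne_zero a8
  have a11 := Nat.pos_of_ne_zero a9
  by_contra hc
  have : 2 ≤ N.relIndex (E ⊓ U) := by omega
  nlinarith

theorem theoremM [IsTotallyComplex K]
    (h2 : ∀ v : HeightOneSpectrum (𝓞 K), Units.mk0 (2:K) (by norm_num) ∈ EV v)
    (h3 : ∀ v : HeightOneSpectrum (𝓞 K), Units.mk0 (3:K) (by norm_num) ∈ EV v) :
    ∃ p q r t : K, ¬ (p = 0 ∧ q = 0 ∧ r = 0 ∧ t = 0) ∧ p ^ 2 + q ^ 2 + r ^ 2 + t ^ 2 = 0 := by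
  classical
  by_cases hsq : IsSquare (-3 : K)
  · obtain ⟨X, hX⟩ := hsq
    refine ⟨X, 1, 1, 1, by simp, ?_⟩
    linear_combination -hX
  have hm1 : ∀ v : HeightOneSpectrum (𝓞 K), (-1 : Kˣ) ∈ EV v := fun v =>
    unit_mem_EV v (by simp [Valuation.map_neg])
  set b : Kˣ := -1 * Units.mk0 (3:K) (by norm_num) with hbdef
  have hb3 : (b : K) = -3 := by simp [hbdef]
  have hbs : ¬ IsSquare (b : K) := by rw [hb3]; exact hsq
  have hbE : ∀ v, b ∈ EV v := fun v => mul_mem (hm1 v) (h3 v)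
  obtain ⟨S, hS0, hP⟩ := exists_PrS (K := K)
    ((fin_ne_one (K := K) (x := 2) (by norm_num)).toFinset ∪ (fin_ne_one (K := K) (x := 3) (by norm_num)).toFinset)
  have hS2 : ∀ v ∉ S, v.valuation K (2:K) = 1 := by
    intro v hv
    by_contra hc
    exact hv (hS0 (by simp [hc]))
  have hS3 : ∀ v ∉ S, v.valuation K (3:K) = 1 := by
    intro v hv
    by_contra hc
    exact hv (hS0 (by simp [hc]))
  have hbU : b ∈ US S := by
    intro v hv
    rw [hb3, Valuation.map_neg, hS3 v hv]
  have hr : 0 < Fintype.card (InfinitePlace K) := Fintype.card_pos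
  obtain ⟨k, hk⟩ : ∃ k, k + 1 = S.card + Fintype.card (InfinitePlace K) := ⟨S.card + Fintype.card (InfinitePlace K) - 1, by omega⟩
  obtain ⟨T, hST, hTk, hTb, hpat⟩ := lemma2 S hS2 b hbU hbs k hk.le
  set U := US (S ∪ T) with hU
  set Sg : Subgroup Kˣ := ⨅ v : S, LS (v : HeightOneSpectrum (𝓞 K)) with hSg
  obtain ⟨i0, i1⟩ := LS_inf_index S
  have hfr : Module.finrank ℚ K = 2 * Fintype.card (InfinitePlace K) := by
    rw [card_places, IsTotallyComplex.finrank]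
  have hle : Sg ⊓ U ≤ sqU (S ∪ T) := by
    rintro u ⟨hu1, hu2⟩
    refine mem_sqU hu2 (lemma3 S T hS2 hP hST hpat u hu2 (fun v hv => ?_))
    exact (Subgroup.mem_iInf.1 hu1) ⟨v, hv⟩
  have hrel0 : Sg.relIndex U ≠ 0 := fun h => i0 (Subgroup.index_eq_zero_of_relIndex_eq_zero h)
  have hlow : 2 ^ ((S ∪ T).card + Fintype.card (InfinitePlace K)) ≤ Sg.relIndex U := by
    rw [← sqU_relIndex (S ∪ T), ← Subgroup.inf_relIndex_right Sg U]
    refine Nat.le_of_dvd (Nat.pos_of_ne_zero ?_) (Subgroup.relIndex_dvd_of_le_left _ hle)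
    rwa [Subgroup.inf_relIndex_right]
  have hup : Sg.index ≤ 2 * Sg.relIndex U := by
    refine i1.trans (le_trans (le_of_eq ?_) (Nat.mul_le_mul_left 2 hlow))
    rw [Finset.card_union_of_disjoint hST, hfr, hTk, show (4:ℕ) = 2 ^ 2 by norm_num, ← pow_mul, ← pow_add, ← pow_succ']
    congr 1
    omega
  set Sn := S.filter (fun v => b ∉ LS v) with hSn
  set Sp := S.filter (fun v => b ∈ LS v) with hSp
  have hcard : Sp.card + Sn.card = S.card := Finset.card_filter_add_card_filter_not _
  set E : Subgroup Kˣ := ⨅ v : Sn, EV (v : HeightOneSpectrum (𝓞 K)) with hE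
  have hSgE : Sg ≤ E := by
    refine le_iInf fun v => ?_
    refine (iInf_le _ (⟨v, (Finset.mem_filter.1 v.2).1⟩ : S)).trans (LS_le_EV _)
  have hEi : 2 ^ Sn.card ≤ E.index := by
    rw [← Subgroup.relIndex_top_right]
    refine pattern_relIndex Sn (fun v => EV v) ⊤ E (fun v hv => iInf_le _ (⟨v, hv⟩ : Sn)) (fun η => ?_) ?_
    · obtain ⟨x, hx⟩ := EV_pattern (K := K) Sn η
      exact ⟨x, trivial, hx⟩
    · rw [Subgroup.relIndex_top_right]
      exact fun h => i0 (Nat.eq_zero_of_zero_dvd (h ▸ Subgroup.index_dvd_of_le hSgE))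
  have hNE : NV (b : K) ≤ E := by
    refine le_iInf fun v => ?_
    have hv := (Finset.mem_filter.1 v.2).2
    rcases (val2_le (v : HeightOneSpectrum (𝓞 K))).lt_or_eq with h | h
    · exact NV_neg3_le_EV _ h b hb3 hv
    · exact NV_le_EV_odd _ h b (hbE _) hv
  obtain ⟨j0, j1⟩ := lemma1 (S ∪ T) (Sp ∪ T) (fun v hv => hS2 v (fun h => hv (Finset.mem_union_left _ h)))
    (hP.mono Finset.subset_union_left) b (US_mono Finset.subset_union_left hbU) hbs
    (Finset.union_subset_union_left (Finset.filter_subset _ _))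
    (by
      intro v hv
      rcases Finset.mem_union.1 hv with h | h
      · exact (Finset.mem_filter.1 h).2
      · exact hTb v h)
  have hj : (NV (b : K)).relIndex U * 2 ≤ 2 ^ Sn.card := by
    rw [Finset.card_union_of_disjoint hST, Finset.card_union_of_disjoint (hST.mono_left (Finset.filter_subset _ _)), ← hcard] at j1
    have e1 : 2 ^ (Sp.card + T.card + 1) = 2 * 2 ^ (Sp.card + T.card) := by rw [pow_succ']
    have e2 : 2 ^ (Sp.card + Sn.card + T.card) = 2 ^ Sn.card * 2 ^ (Sp.card + T.card) := by rw [← pow_add]; congr 1; omega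
    rw [e1, e2, ← mul_assoc] at j1
    exact Nat.le_of_mul_le_mul_right j1 (by positivity)
  have hfin := grp Sg E U (NV (b : K)) Sn.card hSgE i0 hup hEi hNE j0 hj
  have hmem : (-1 * Units.mk0 (2:K) (by norm_num) : Kˣ) ∈ E ⊓ U := by
    refine ⟨Subgroup.mem_iInf.2 fun v => mul_mem (hm1 _) (h2 _), fun v hv => ?_⟩
    have := hS2 v (fun h => hv (Finset.mem_union_left _ h))
    simpa [Valuation.map_neg] using this
  obtain ⟨α, β, h⟩ := hfin hmem
  rw [hb3] at h
  simp at h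
  refine ⟨α, β + 1, β - 1, β, ?_, by linear_combination -h⟩
  rintro ⟨-, h1, h2, h3⟩
  rw [h3] at h1
  simp at h1

end FourSq

namespace FourSq
open IsDedekindDomain NumberField

lemma preord_adj {F : Type*} [Field F] (P : RingPreordering F) {x : F} (hx : x ∉ P) :
    ∃ Q, P ≤ Q ∧ -x ∈ Q := by
  refine ⟨RingPreordering.mk' {z | ∃ s ∈ P, ∃ t ∈ P, z = s - x * t} ?_ ?_ ?_ ?_, ?_, ?_⟩
  · rintro _ _ ⟨s, hs, t, ht, rfl⟩ ⟨s', hs', t', ht', rfl⟩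
    exact ⟨s + s', add_mem hs hs', t + t', add_mem ht ht', by ring⟩
  · rintro _ _ ⟨s, hs, t, ht, rfl⟩ ⟨s', hs', t', ht', rfl⟩
    exact ⟨s * s' + x ^ 2 * (t * t'), add_mem (mul_mem hs hs') (mul_mem (P.pow_two_mem x) (mul_mem ht ht')),
      s * t' + s' * t, add_mem (mul_mem hs ht') (mul_mem hs' ht), by ring⟩
  · intro y
    exact ⟨y * y, P.mul_self_mem y, 0, zero_mem P, by ring⟩
  · rintro ⟨s, hs, t, ht, h⟩
    have ht0 : t ≠ 0 := by
      rintro rfl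
      rw [mul_zero, sub_zero] at h
      exact P.neg_one_notMem (h ▸ hs)
    apply hx
    have : x = (1 + s) * t⁻¹ := by
      field_simp
      linear_combination h
    rw [this]
    exact mul_mem (add_mem (one_mem P) hs) (RingPreordering.inv_mem ht)
  · intro y hy
    exact ⟨y, hy, 0, zero_mem P, by ring⟩
  · exact ⟨0, zero_mem P, 1, one_mem P, by ring⟩

lemma preord_max {F : Type*} [Field F] (P : RingPreordering F) :
    ∃ Q, P ≤ Q ∧ ∀ x, x ∈ Q ∨ -x ∈ Q := by
  obtain ⟨m, hPm, hm⟩ := zorn_le_nonempty_Ici₀ P (by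
    intro c hcP hc y hy
    refine ⟨RingPreordering.mk' {z | ∃ Q ∈ c, z ∈ Q} ?_ ?_ ?_ ?_, ?_⟩
    · rintro a b ⟨Q, hQ, ha⟩ ⟨R, hR, hb⟩
      rcases hc.total hQ hR with h | h
      · exact ⟨R, hR, add_mem (h ha) hb⟩
      · exact ⟨Q, hQ, add_mem ha (h hb)⟩
    · rintro a b ⟨Q, hQ, ha⟩ ⟨R, hR, hb⟩
      rcases hc.total hQ hR with h | h
      · exact ⟨R, hR, mul_mem (h ha) hb⟩
      · exact ⟨Q, hQ, mul_mem ha (h hb)⟩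
    · intro x
      exact ⟨y, hy, y.mul_self_mem x⟩
    · rintro ⟨Q, hQ, h⟩
      exact Q.neg_one_notMem h
    · intro z hz a ha
      exact ⟨z, hz, ha⟩) P le_rfl
  refine ⟨m, hPm, fun x => ?_⟩
  by_cases hx : x ∈ m
  · exact Or.inl hx
  · obtain ⟨Q, hQ, h⟩ := preord_adj m hx
    exact Or.inr (hm hQ h)

lemma arch_of_alg (H : Type*) [Field H] [Algebra ℚ H] [Algebra.IsAlgebraic ℚ H] [LinearOrder H]
    [IsStrictOrderedRing H] : Archimedean H := by
  rw [archimedean_iff_nat_le]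
  intro x
  by_cases hx : x ≤ 1
  · exact ⟨1, by simpa using hx⟩
  push Not at hx
  have hxi : IsIntegral ℚ x := (Algebra.IsAlgebraic.isAlgebraic x).isIntegral
  set p := minpoly ℚ x with hp
  have hm : p.Monic := minpoly.monic hxi
  have hn : 0 < p.natDegree := minpoly.natDegree_pos hxi
  obtain ⟨n, hn'⟩ : ∃ n, p.natDegree = n + 1 := ⟨p.natDegree - 1, by omega⟩
  have h0 : Polynomial.aeval x p = 0 := minpoly.aeval ℚ x
  rw [hm.as_sum] at h0
  simp only [map_add, map_pow, Polynomial.aeval_X, map_sum, map_mul, Polynomial.aeval_C] at h0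
  rw [hn'] at h0
  have x0 : 0 < x := one_pos.trans hx
  have h1 : x ^ (n + 1) ≤ (∑ i ∈ Finset.range (n + 1), |algebraMap ℚ H (p.coeff i)|) * x ^ n := by
    rw [eq_neg_of_add_eq_zero_left h0, Finset.sum_mul, ← Finset.sum_neg_distrib]
    refine Finset.sum_le_sum fun i hi => ?_
    rw [← neg_mul]
    have : x ^ i ≤ x ^ n := pow_le_pow_right₀ hx.le (by simp at hi; omega)
    exact mul_le_mul (neg_le_abs _) this (by positivity) (by positivity)
  have h2 : x ≤ ∑ i ∈ Finset.range (n + 1), |algebraMap ℚ H (p.coeff i)| := by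
    rw [pow_succ'] at h1
    exact le_of_mul_le_mul_right h1 (by positivity)
  obtain ⟨N, hN⟩ := exists_nat_ge (∑ i ∈ Finset.range (n + 1), |p.coeff i|)
  refine ⟨N, h2.trans ?_⟩
  have e : ∑ i ∈ Finset.range (n + 1), |algebraMap ℚ H (p.coeff i)| = ((∑ i ∈ Finset.range (n + 1), |p.coeff i| : ℚ) : H) := by
    simp
  rw [e]
  exact_mod_cast hN

theorem isSumSq_of_nonneg (H : Type*) [Field H] [Algebra ℚ H] [Algebra.IsAlgebraic ℚ H] (x : H)
    (hx : ∀ σ : H →+* ℝ, 0 ≤ σ x) : IsSumSq x := by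
  classical
  have : CharZero H := algebraRat.charZero H
  by_contra hxs
  by_cases h1 : IsSumSq (-1 : H)
  · apply hxs
    have e : x = ((x + 1) / 2) * ((x + 1) / 2) + (-1) * (((x - 1) / 2) * ((x - 1) / 2)) := by ring
    rw [e]
    exact (IsSumSq.mul_self _).add (h1.mul (IsSumSq.mul_self _))
  let P : RingPreordering H := RingPreordering.mk' {z | IsSumSq z} (fun a b => a.add b) (fun a b => a.mul b)
    (fun a => IsSumSq.mul_self a) h1
  obtain ⟨Q, -, hQ⟩ := preord_adj P (x := x) hxs
  obtain ⟨M, hM, hMt⟩ := preord_max Q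
  have hMx := hM hQ
  let C : RingCone H := { M.toSubsemiring with
    eq_zero_of_mem_of_neg_mem' := fun {a} h h' => RingPreordering.eq_zero_of_mem_of_neg_mem (P := M) h h' }
  have hC : ∀ z, z ∈ C ↔ z ∈ M := fun z => Iff.rfl
  have : HasMemOrNegMem C := ⟨hMt⟩
  let _ : LinearOrder H := LinearOrder.mkOfAddGroupCone C
  have : IsOrderedRing H := IsOrderedRing.mkOfCone C
  have : IsStrictOrderedRing H := IsOrderedRing.toIsStrictOrderedRing H
  have := arch_of_alg H
  obtain ⟨φ⟩ := Real.nonemptyOrderRingHom H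
  have h0 : x ≤ 0 := by
    show 0 - x ∈ C
    rw [zero_sub]; exact hMx
  have hne : x ≠ 0 := by rintro rfl; exact hxs IsSumSq.zero
  have hlt : (φ : H →+* ℝ) x ≤ 0 := by
    have := φ.monotone' h0
    simpa using this
  have : (φ : H →+* ℝ) x = 0 := le_antisymm hlt (hx _)
  exact hne ((map_eq_zero _).1 this)

end FourSq

namespace FourSq
open IsDedekindDomain NumberField

/-- sums of four squares -/
def S4 {F : Type*} [Field F] (x : F) : Prop := ∃ p q r t : F, x = p ^ 2 + q ^ 2 + r ^ 2 + t ^ 2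

/-- the four squares form is isotropic -/
def Iso4 (F : Type*) [Field F] : Prop :=
  ∃ p q r t : F, ¬ (p = 0 ∧ q = 0 ∧ r = 0 ∧ t = 0) ∧ p ^ 2 + q ^ 2 + r ^ 2 + t ^ 2 = 0

lemma S4.mul {F : Type*} [Field F] {x y : F} (hx : S4 x) (hy : S4 y) : S4 (x * y) := by
  obtain ⟨a, b, c, d, rfl⟩ := hx
  obtain ⟨p, q, r, s, rfl⟩ := hy
  exact ⟨a * p - b * q - c * r - d * s, a * q + b * p + c * s - d * r,
    a * r - b * s + c * p + d * q, a * s + b * r - c * q + d * p, by ring⟩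

lemma S4.sq {F : Type*} [Field F] (x : F) : S4 (x ^ 2) := ⟨x, 0, 0, 0, by ring⟩

lemma S4.div {F : Type*} [Field F] {x y : F} (hx : S4 x) (hy : S4 y) : S4 (x / y) := by
  have : x / y = x * y * (y⁻¹) ^ 2 := by
    by_cases h : y = 0
    · simp [h]
    · field_simp
  rw [this]
  exact (hx.mul hy).mul (S4.sq _)

lemma Iso4.univ {F : Type*} [Field F] [CharZero F] (h : Iso4 F) (x : F) : S4 x := by
  obtain ⟨p, q, r, t, hne, h0⟩ := h
  by_cases hp : p = 0
  · by_cases hq : q = 0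
    · by_cases hr : r = 0
      · have ht : t ≠ 0 := fun ht => hne ⟨hp, hq, hr, ht⟩
        set l := (x - 1) / (2 * t) with hl
        have hl' : 2 * t * l = x - 1 := by rw [hl]; field_simp
        exact ⟨l * p, l * q, l * r, l * t + 1, by linear_combination -hl' - l ^ 2 * h0⟩
      · set l := (x - 1) / (2 * r) with hl
        have hl' : 2 * r * l = x - 1 := by rw [hl]; field_simp
        exact ⟨l * p, l * q, l * r + 1, l * t, by linear_combination -hl' - l ^ 2 * h0⟩
    · set l := (x - 1) / (2 * q) with hl
      have hl' : 2 * q * l = x - 1 := by rw [hl]; field_simp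
      exact ⟨l * p, l * q + 1, l * r, l * t, by linear_combination -hl' - l ^ 2 * h0⟩
  · set l := (x - 1) / (2 * p) with hl
    have hl' : 2 * p * l = x - 1 := by rw [hl]; field_simp
    exact ⟨l * p + 1, l * q, l * r, l * t, by linear_combination -hl' - l ^ 2 * h0⟩

section
variable {K L : Type*} [Field K] [NumberField K] [Field L] [NumberField L]

lemma EV_map (f : K →+* L) (w : HeightOneSpectrum (𝓞 L)) (x : Kˣ) (hx : x ∈ EV (pb f w)) :
    Units.map (f : K →* L) x ∈ EV w := by
  obtain ⟨e, -, he⟩ := pb_spec f w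
  obtain ⟨y, hy⟩ := hx
  refine ⟨Units.map (f : K →* L) y, ?_⟩
  have h1 := he (x : K)
  have h2 := he (y : K)
  simp only [Units.coe_map, MonoidHom.coe_coe]
  rw [← h1, ← h2, hy, ← pow_mul, ← pow_mul, mul_comm]

lemma EV_congr (v : HeightOneSpectrum (𝓞 K)) (x y : Kˣ) (h : v.valuation K (x : K) = v.valuation K (y : K)) :
    x ∈ EV v ↔ y ∈ EV v := by
  show (∃ z : Kˣ, _ = _) ↔ (∃ z : Kˣ, _ = _)
  rw [h]

lemma EV_flip (f : K →+* L) (w : HeightOneSpectrum (𝓞 L)) (c d : Kˣ) (r : L) (hr : r ^ 2 = f (-d))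
    (h : c ∉ EV (pb f w) → d ∉ EV (pb f w)) : Units.map (f : K →* L) c ∈ EV w := by
  by_cases hc : c ∈ EV (pb f w)
  · exact EV_map f w c hc
  · have h1 := EV_map f w _ (mul_mem_EV _ hc (h hc))
    rw [map_mul] at h1
    refine (Subgroup.mul_mem_cancel_right _ ?_).1 h1
    have hr0 : r ≠ 0 := by
      rintro rfl
      have : f (-(d : K)) ≠ 0 := (map_ne_zero f).2 (neg_ne_zero.2 d.ne_zero)
      exact this (by rw [← hr]; ring)
    refine ⟨Units.mk0 r hr0, ?_⟩
    have : f (d : K) = - r ^ 2 := by rw [hr, map_neg, neg_neg]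
    simp only [Units.coe_map, MonoidHom.coe_coe, Units.val_mk0]
    rw [this, Valuation.map_neg, map_pow]

lemma tc_of_neg (f : K →+* L) (d : K) (hd0 : d ≠ 0) (hd : IsSumSq d) (r : L) (hr : r ^ 2 = f (-d)) :
    IsTotallyComplex L := by
  refine ⟨fun w => ?_⟩
  rw [← InfinitePlace.not_isReal_iff_isComplex]
  intro hw
  let φ : L →+* ℝ := InfinitePlace.embedding_of_isReal hw
  have h1 : φ r ^ 2 = - (φ.comp f) d := by
    rw [← map_pow, hr, map_neg, map_neg]; rfl
  have h2 : ∀ z : K, IsSumSq z → 0 ≤ (φ.comp f) z := by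
    intro z hz
    induction hz with
    | zero => simp
    | sq_add a _ ih =>
      rw [map_add, map_mul]
      exact add_nonneg (mul_self_nonneg _) ih
  have h3 := h2 d hd
  have h4 : (φ.comp f) d ≠ 0 := (map_ne_zero _).2 hd0
  have h5 : 0 < (φ.comp f) d := lt_of_le_of_ne h3 h4.symm
  nlinarith [sq_nonneg (φ r)]

lemma iso_ext (f : K →+* L) (d : Kˣ) (hd : IsSumSq (d : K)) (r : L) (hr : r ^ 2 = f (-d))
    (h2 : ∀ v : HeightOneSpectrum (𝓞 K), Units.mk0 (2:K) (by norm_num) ∉ EV v → d ∉ EV v)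
    (h3 : ∀ v : HeightOneSpectrum (𝓞 K), Units.mk0 (3:K) (by norm_num) ∉ EV v → d ∉ EV v) : Iso4 L := by
  have := tc_of_neg f d d.ne_zero hd r hr
  refine theoremM (K := L) (fun w => ?_) (fun w => ?_)
  · have := EV_flip f w _ d r hr (h2 _)
    convert this using 1
    ext; simp [map_ofNat]
  · have := EV_flip f w _ d r hr (h3 _)
    convert this using 1
    ext; simp [map_ofNat]

lemma exists_X (a : Kˣ) : ∃ y z : K, ∀ hs : 1 + y ^ 2 + z ^ 2 ≠ 0, ∀ v : HeightOneSpectrum (𝓞 K),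
    (Units.mk0 (2:K) (by norm_num) ∉ EV v → a * Units.mk0 _ hs ∉ EV v) ∧
    (Units.mk0 (3:K) (by norm_num) ∉ EV v → a * Units.mk0 _ hs ∉ EV v) := by
  classical
  set D := (fin_ne_one (K := K) (x := 2) (by norm_num)).toFinset ∪
    (fin_ne_one (K := K) (x := 3) (by norm_num)).toFinset with hD
  have hn : ∀ v : HeightOneSpectrum (𝓞 K), ∃ n : ℕ, WithZero.exp (-(n : ℤ)) < v.valuation K (6 : K) := by
    intro v
    obtain ⟨m, hm⟩ := exists_exp v (x := (6 : K)) (by norm_num)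
    refine ⟨(-m).toNat + 1, ?_⟩
    rw [hm, WithZero.exp_lt_exp]
    omega
  choose n hn using hn
  obtain ⟨y, hy⟩ := crt D n (fun v => if a ∉ EV v then 0 else 1)
  obtain ⟨z, hz⟩ := crt D n (fun v => if a ∉ EV v then 0 else if v.valuation K (2 : K) ≠ 1 then 0 else 1)
  refine ⟨algebraMap (𝓞 K) K y, algebraMap (𝓞 K) K z, fun hs v => ?_⟩
  by_cases hv : v ∈ D
  swap
  · have e2 : v.valuation K (2 : K) = 1 := by
      by_contra hc; exact hv (by simp [hD, hc])
    have e3 : v.valuation K (3 : K) = 1 := by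
      by_contra hc; exact hv (by simp [hD, hc])
    exact ⟨fun h => (h (unit_mem_EV v e2)).elim, fun h => (h (unit_mem_EV v e3)).elim⟩
  have hy := hy v hv
  have hz := hz v hv
  have h6 : v.valuation K (6 : K) = v.valuation K (2 : K) * v.valuation K (3 : K) := by
    rw [← map_mul]; norm_num
  have l2 := val2_le v
  have l3 : v.valuation K (3 : K) ≤ 1 := by exact_mod_cast v_nat_le v 3
  have l62 : v.valuation K (6 : K) ≤ v.valuation K (2 : K) := by rw [h6]; exact mul_le_of_le_one_right' l3
  have l63 : v.valuation K (6 : K) ≤ v.valuation K (3 : K) := by rw [h6]; exact mul_le_of_le_one_left' l2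
  have sqm : ∀ (x c : 𝓞 K), x - c ∈ v.asIdeal ^ n v → x ^ 2 - c ^ 2 ∈ v.asIdeal ^ n v := by
    intro x c h
    rw [sq_sub_sq]
    exact Ideal.mul_mem_left _ _ h
  have key : ∀ (c1 c2 : 𝓞 K), y - c1 ∈ v.asIdeal ^ n v → z - c2 ∈ v.asIdeal ^ n v →
      v.valuation K (6 : K) ≤ v.valuation K (algebraMap (𝓞 K) K (1 + c1 ^ 2 + c2 ^ 2)) →
      v.valuation K (1 + algebraMap (𝓞 K) K y ^ 2 + algebraMap (𝓞 K) K z ^ 2) = v.valuation K (algebraMap (𝓞 K) K (1 + c1 ^ 2 + c2 ^ 2)) := by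
    intro c1 c2 h1 h2 h
    have h3 := (vpow_iff v _ _).2 (add_mem (sqm _ _ h1) (sqm _ _ h2))
    have h4 := (h3.trans_lt (hn v)).trans_le h
    have := Valuation.map_add_eq_of_lt_right _ h4
    rw [← this]
    congr 1
    simp only [map_add, map_sub, map_pow, map_one]
    ring
  by_cases ha : a ∈ EV v
  · rw [if_neg (by simpa using ha)] at hy hz
    by_cases h2 : v.valuation K (2 : K) = 1
    · rw [if_neg (by simpa using h2)] at hz
      have k := key 1 1 hy hz (by
        refine l63.trans (le_of_eq ?_)
        simp only [map_add, map_pow, map_one]; norm_num)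
      have hE : Units.mk0 _ hs ∈ EV v ↔ Units.mk0 (3:K) (by norm_num) ∈ EV v := EV_congr v _ _ (by
        simp only [Units.val_mk0]
        rw [k]
        simp only [map_add, map_pow, map_one]; norm_num)
      refine ⟨fun h => (h (unit_mem_EV v h2)).elim, fun h h' => h (hE.1 ((Subgroup.mul_mem_cancel_left _ ha).1 h'))⟩
    · rw [if_pos h2] at hz
      have h3 : v.valuation K (3 : K) = 1 := by
        have l : v.valuation K (2 : K) < v.valuation K (1 : K) := by
          rw [map_one]; exact lt_of_le_of_ne l2 h2
        have := Valuation.map_add_eq_of_lt_right _ l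
        rw [map_one] at this
        rw [← this]; norm_num
      have k := key 1 0 hy hz (by
        refine l62.trans (le_of_eq ?_)
        simp only [map_add, map_pow, map_one, map_zero]; norm_num)
      have hE : Units.mk0 _ hs ∈ EV v ↔ Units.mk0 (2:K) (by norm_num) ∈ EV v := EV_congr v _ _ (by
        simp only [Units.val_mk0]
        rw [k]
        simp only [map_add, map_pow, map_one, map_zero]; norm_num)
      refine ⟨fun h h' => h (hE.1 ((Subgroup.mul_mem_cancel_left _ ha).1 h')), fun h => (h (unit_mem_EV v h3)).elim⟩
  · rw [if_pos ha] at hy hz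
    have k := key 0 0 hy hz (by
      simp only [map_add, map_pow, map_one, map_zero]
      rw [h6]; simpa using mul_le_one' l2 l3)
    have hE : Units.mk0 _ hs ∈ EV v := unit_mem_EV v (by
      simp only [Units.val_mk0]
      rw [k]
      simp)
    exact ⟨fun _ h' => ha ((Subgroup.mul_mem_cancel_right _ hE).1 h'), fun _ h' => ha ((Subgroup.mul_mem_cancel_right _ hE).1 h')⟩

end

theorem S4_of_isSumSq {K : Type*} [Field K] [NumberField K] (a : K) (ha : IsSumSq a) : S4 a := by
  by_cases ha0 : a = 0
  · exact ⟨0, 0, 0, 0, by simp [ha0]⟩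
  obtain ⟨y, z, hyz⟩ := exists_X (Units.mk0 a ha0)
  by_cases hs : 1 + y ^ 2 + z ^ 2 = 0
  · exact Iso4.univ ⟨1, y, z, 0, by simp, by linear_combination hs⟩ a
  have hyz := hyz hs
  set s := 1 + y ^ 2 + z ^ 2 with hsdef
  have s4 : S4 s := ⟨1, y, z, 0, by rw [hsdef]; ring⟩
  set d : Kˣ := Units.mk0 a ha0 * Units.mk0 s hs with hd
  have hdv : (d : K) = a * s := by simp [hd]
  have hds : IsSumSq (d : K) := by
    rw [hdv]
    refine ha.mul ?_
    rw [hsdef, sq, sq]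
    exact (IsSumSq.one.add (IsSumSq.mul_self _)).add (IsSumSq.mul_self _)
  have fin : S4 (d : K) → S4 a := by
    intro h
    have : a = (d : K) / s := by rw [hdv]; field_simp
    rw [this]
    exact h.div s4
  by_cases hsq : IsSquare (-(d : K))
  · obtain ⟨r, hr⟩ := hsq
    exact Iso4.univ (iso_ext (RingHom.id K) d hds r (by rw [RingHom.id_apply, hr, sq])
      (fun v => (hyz v).1) (fun v => (hyz v).2)) a
  obtain ⟨L, _, _, _, ⟨Q⟩⟩ := exists_QE hsq
  obtain ⟨p, q, r, t, hne, h0⟩ := iso_ext (algebraMap K L) d hds Q.r Q.hr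
      (fun v => (hyz v).1) (fun v => (hyz v).2)
  obtain ⟨p1, p2, rfl⟩ := Q.rep p
  obtain ⟨q1, q2, rfl⟩ := Q.rep q
  obtain ⟨r1, r2, rfl⟩ := Q.rep r
  obtain ⟨t1, t2, rfl⟩ := Q.rep t
  have hr := Q.hr
  set A : K := p1 ^ 2 + q1 ^ 2 + r1 ^ 2 + t1 ^ 2 - d * (p2 ^ 2 + q2 ^ 2 + r2 ^ 2 + t2 ^ 2) with hA
  set B : K := 2 * (p1 * p2 + q1 * q2 + r1 * r2 + t1 * t2) with hB
  have hAB : algebraMap K L A + algebraMap K L B * Q.r = 0 := by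
    rw [← h0, hA, hB]
    simp only [map_sub, map_add, map_mul, map_pow, map_ofNat]
    simp only [map_neg] at hr
    linear_combination -(algebraMap K L p2 ^ 2 + algebraMap K L q2 ^ 2 + algebraMap K L r2 ^ 2 + algebraMap K L t2 ^ 2) * hr
  have hB0 : B = 0 := by
    by_contra hB0
    apply hsq
    refine ⟨-A / B, (algebraMap K L).injective ?_⟩
    have hB' : algebraMap K L B ≠ 0 := (map_ne_zero _).2 hB0
    rw [← hr, map_mul, map_div₀, map_neg]
    field_simp
    linear_combination (-algebraMap K L A + algebraMap K L B * Q.r) * hAB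
  have hA0 : A = 0 := by
    rw [hB0] at hAB
    simpa using hAB
  have hA1 : p1 ^ 2 + q1 ^ 2 + r1 ^ 2 + t1 ^ 2 = d * (p2 ^ 2 + q2 ^ 2 + r2 ^ 2 + t2 ^ 2) := by
    linear_combination hA0
  by_cases hn : p2 ^ 2 + q2 ^ 2 + r2 ^ 2 + t2 ^ 2 = 0
  · rw [hn, mul_zero] at hA1
    by_cases h2 : p2 = 0 ∧ q2 = 0 ∧ r2 = 0 ∧ t2 = 0
    · refine Iso4.univ ⟨p1, q1, r1, t1, ?_, hA1⟩ a
      rintro ⟨rfl, rfl, rfl, rfl⟩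
      obtain ⟨rfl, rfl, rfl, rfl⟩ := h2
      simp at hne
    · exact Iso4.univ ⟨p2, q2, r2, t2, h2, hn⟩ a
  · apply fin
    have : (d : K) = (p1 ^ 2 + q1 ^ 2 + r1 ^ 2 + t1 ^ 2) / (p2 ^ 2 + q2 ^ 2 + r2 ^ 2 + t2 ^ 2) := by
      rw [eq_div_iff hn, hA1]
    rw [this]
    exact S4.div ⟨_, _, _, _, rfl⟩ ⟨_, _, _, _, rfl⟩

lemma exists_sub (H : Type*) [Field H] [Algebra ℚ H] [Algebra.IsAlgebraic ℚ H] (x : H) (hx : IsSumSq x) :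
    ∃ (E : IntermediateField ℚ H), FiniteDimensional ℚ E ∧ ∃ y : E, (y : H) = x ∧ IsSumSq y := by
  have hmap : ∀ (E F : IntermediateField ℚ H) (h : E ≤ F) (y : E), IsSumSq y → IsSumSq (IntermediateField.inclusion h y) := by
    intro E F h y hy
    induction hy with
    | zero => rw [map_zero]; exact IsSumSq.zero
    | sq_add a _ ih => rw [map_add, map_mul]; exact IsSumSq.sq_add _ ih
  induction hx with
  | zero => exact ⟨⊥, inferInstance, 0, by simp, IsSumSq.zero⟩
  | @sq_add a s _ ih =>
    obtain ⟨E, hE, y, hy, hys⟩ := ih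
    have hF : FiniteDimensional ℚ (IntermediateField.adjoin ℚ {a}) :=
      IntermediateField.adjoin.finiteDimensional (Algebra.IsAlgebraic.isAlgebraic a).isIntegral
    let G := E ⊔ IntermediateField.adjoin ℚ {a}
    have ha : a ∈ G := (le_sup_right : _ ≤ G) (IntermediateField.mem_adjoin_simple_self ℚ a)
    refine ⟨G, IntermediateField.finiteDimensional_sup _ _, ⟨a, ha⟩ * ⟨a, ha⟩ + IntermediateField.inclusion le_sup_left y, ?_, ?_⟩
    · simp [hy]
    · exact IsSumSq.sq_add _ (hmap _ _ _ _ hys)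

theorem S4_H (H : Type*) [Field H] [Algebra ℚ H] [Algebra.IsAlgebraic ℚ H] (x : H) (hx : IsSumSq x) : S4 x := by
  have : CharZero H := algebraRat.charZero H
  obtain ⟨E, hE, y, rfl, hy⟩ := exists_sub H x hx
  have : NumberField E := { to_charZero := inferInstance, to_finiteDimensional := by convert hE; exact Subsingleton.elim _ _ }
  obtain ⟨p, q, r, t, h⟩ := S4_of_isSumSq y hy
  exact ⟨p, q, r, t, by rw [h]; push_cast; rfl⟩

end FourSq

/-- Lemma `always non-negative`: for any algebraic extension `H` of `ℚ`, the set of sums of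
four squares in `H` is exactly the set of elements that are nonnegative under every
real embedding of `H`. -/
theorem sum_of_four_squares_iff_nonneg_at_all_real_embeddings
    (H : Type*) [Field H] [Algebra ℚ H] [Algebra.IsAlgebraic ℚ H] :
    {x : H | ∃ x₁ x₂ x₃ x₄ : H, x = x₁ ^ 2 + x₂ ^ 2 + x₃ ^ 2 + x₄ ^ 2} =
      {x : H | ∀ σ : H →+* ℝ, 0 ≤ σ x} := by
  ext x
  constructor
  · rintro ⟨a, b, c, d, rfl⟩ σ
    simp only [map_add, map_pow]
    positivity
  · intro hx
    exact FourSq.S4_H H x (FourSq.isSumSq_of_nonneg H x hx)
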